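/- arXiv:2306.00511 — 4 statements merged into one kernel-verified Lean document; each statement's English description precedes it below -/
import Mathlib

section
/- Let V ∈ 𝒫^{s,p}_q(ℝⁿ), g ∈ W^{s,p}(ℝⁿ), K ∈ 𝒦_p. If u ∈ Y^{s,p}_g(Ω)^+ is a weak supersolution of L^p_K u + V|u|^{p−2}u = 0 in Ω with exterior data g, and u ≥ 0 in B_R(x₀) ⊂ Ω, then there is a constant c₀ > 0 depending only on n, s, p, λ, Λ and Ω such that for every b ∈ (0,1) and every r ∈ (0, R/2): ∬_{B_r(x₀)×B_r(x₀)} | ln( (u(x)+b)/(u(y)+b) ) |^p · K(x−y) dx dy ≤ c₀ · r^{n−ps} · [ b^{−(p−1)}·(r/R)^{ps}·[𝒯_R(u_−;x₀)]^{p−1} + (1 + ‖V_+‖_{L^q(Ω)}) ], where u_− = max{−u,0}. -/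
open MeasureTheory Real Set Metric Filter ENNReal

noncomputable section

abbrev Rn (n : ℕ) : Type := EuclideanSpace ℝ (Fin n)

namespace NLS

/-- The normalization constant `c_{n,p,s}`. -/
def cnps (n : ℕ) (p s : ℝ) : ℝ :=
  Real.Gamma (((n : ℝ) + p) / 2) * p * (1 - s) /
    (Real.pi ^ (((n : ℝ) - 1) / 2) * Real.Gamma ((p + 1) / 2))

/-- Membership in the kernel class `𝒦_p`. -/
def KernelClass (n : ℕ) (p s lam Lam : ℝ) (K : Rn n → ℝ) : Prop :=
  Measurable K ∧ (∀ y, K (-y) = K y) ∧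
    ∀ y : Rn n, y ≠ 0 →
      cnps n p s * lam * ‖y‖ ^ (-(n : ℝ) - p * s) ≤ K y ∧
        K y ≤ cnps n p s * Lam * ‖y‖ ^ (-(n : ℝ) - p * s)

/-- `H_p(t) = |t|^{p-2} t`. -/
def Hp (p t : ℝ) : ℝ := |t| ^ (p - 2) * t

/-- Positive part of a function. -/
def plusPart {n : ℕ} (f : Rn n → ℝ) : Rn n → ℝ := fun x => max (f x) 0

/-- Negative part of a function. -/
def minusPart {n : ℕ} (f : Rn n → ℝ) : Rn n → ℝ := fun x => max (-f x) 0

/-- The Gagliardo integrand `|u(x)-u(y)|^p |x-y|^{-n-ps}`. -/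
def gagliardoIntegrand (n : ℕ) (p s : ℝ) (u : Rn n → ℝ) (z : Rn n × Rn n) : ℝ :=
  |u z.1 - u z.2| ^ p * ‖z.1 - z.2‖ ^ (-(n : ℝ) - p * s)

/-- The Gagliardo seminorm `[u]_{W^{s,p}(U)}`. -/
def gagliardoSemi (n : ℕ) (p s : ℝ) (U : Set (Rn n)) (u : Rn n → ℝ) : ℝ :=
  (∫ z in U ×ˢ U, gagliardoIntegrand n p s u z) ^ (1 / p)

/-- The `L^p(U)` norm. -/
def lpNormOn (n : ℕ) (p : ℝ) (U : Set (Rn n)) (u : Rn n → ℝ) : ℝ :=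
  (∫ x in U, |u x| ^ p) ^ (1 / p)

/-- The `W^{s,p}(U)` norm. -/
def wspNorm (n : ℕ) (p s : ℝ) (U : Set (Rn n)) (u : Rn n → ℝ) : ℝ :=
  lpNormOn n p U u + gagliardoSemi n p s U u

/-- Membership in the fractional Sobolev space `W^{s,p}(U)`. -/
def MemWsp (n : ℕ) (p s : ℝ) (U : Set (Rn n)) (u : Rn n → ℝ) : Prop :=
  Measurable u ∧ IntegrableOn (fun x => |u x| ^ p) U ∧
    IntegrableOn (gagliardoIntegrand n p s u) (U ×ˢ U)

/-- `ℝ^{2n}_Ω = ℝ^{2n} ∖ (Ωᶜ × Ωᶜ)`. -/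
def R2n (n : ℕ) (Ω : Set (Rn n)) : Set (Rn n × Rn n) := {z | z.1 ∈ Ω ∨ z.2 ∈ Ω}

/-- Membership in `X^{s,p}(Ω)`. -/
def MemX (n : ℕ) (p s : ℝ) (Ω : Set (Rn n)) (u : Rn n → ℝ) : Prop :=
  Measurable u ∧ IntegrableOn (fun x => |u x| ^ p) Ω ∧
    IntegrableOn (gagliardoIntegrand n p s u) (R2n n Ω)

/-- Membership in `X^{s,p}_0(Ω)`. -/
def MemX0 (n : ℕ) (p s : ℝ) (Ω : Set (Rn n)) (u : Rn n → ℝ) : Prop :=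
  MemX n p s Ω u ∧ ∀ᵐ x ∂(volume : Measure (Rn n)), x ∉ Ω → u x = 0

/-- The norm `‖u‖_{X^{s,p}_0(Ω)}`. -/
def normX0 (n : ℕ) (p s : ℝ) (Ω : Set (Rn n)) (u : Rn n → ℝ) : ℝ :=
  (∫ z in R2n n Ω, gagliardoIntegrand n p s u z) ^ (1 / p)

/-- Open axis-parallel cube with center `c` and half side-length `h`. -/
def cube (n : ℕ) (c : Fin n → ℝ) (h : ℝ) : Set (Rn n) := {y | ∀ i, |y i - c i| < h}

/-- The `(A_1,A_1)` characteristic `[υ,ω]_{(A_1,A_1)}`. -/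
def A1const (n : ℕ) (υ ω : Rn n → ℝ) : ℝ≥0∞ :=
  ⨆ (c : Fin n → ℝ) (h : ℝ) (_ : 0 < h),
    ENNReal.ofReal (⨍ y in cube n c h, υ y) *
      essSup (fun y => (ENNReal.ofReal (ω y))⁻¹) (volume.restrict (cube n c h))

/-- `(υ,ω)` belongs to the `(A_1,A_1)`-Muckenhoupt class. -/
def A1pair (n : ℕ) (υ ω : Rn n → ℝ) : Prop := A1const n υ ω < ⊤

/-- `ω` belongs to the `A_1`-Muckenhoupt class. -/
def A1 (n : ℕ) (ω : Rn n → ℝ) : Prop := A1pair n ω ω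

/-- Membership in the potential class `𝒫^{s,p}_q(ℝⁿ)`. -/
structure IsPotential (n : ℕ) (p s q : ℝ) (V : Rn n → ℝ) : Prop where
  measurable : Measurable V
  minusPart_locInt : LocallyIntegrable (minusPart V) volume
  plusPart_locLq : LocallyIntegrable (fun x => plusPart V x ^ q) volume
  exists_b : ∃ b : Rn n → ℝ, Measurable b ∧ (∀ᵐ x ∂(volume : Measure (Rn n)), 0 < b x) ∧
    (∃ M : ℝ, ∀ x, |b x| ≤ M) ∧
    LocallyIntegrable (fun x => (plusPart V x / b x) ^ q) volume ∧
    ∀ i : ℕ, 0 < i →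
      A1pair n (minusPart V) (fun x => max (b x) (1 / (i : ℝ)) / b x * plusPart V x) ∧
      A1 n (fun x => max (b x) (1 / (i : ℝ)) / b x * plusPart V x)

/-- Membership in the weighted class `L^p_V(Ω)`. -/
def MemLpV (n : ℕ) (p : ℝ) (Ω : Set (Rn n)) (V u : Rn n → ℝ) : Prop :=
  IntegrableOn (fun x => |u x| ^ p * plusPart V x) Ω ∧
    IntegrableOn (fun x => |u x| ^ p * minusPart V x) Ω

/-- Membership in `Y^{s,p}(Ω)`. -/
def MemY (n : ℕ) (p s : ℝ) (Ω : Set (Rn n)) (V u : Rn n → ℝ) : Prop :=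
  MemX n p s Ω u ∧ MemLpV n p Ω V u

/-- Membership in `Y^{s,p}_0(Ω)`. -/
def MemY0 (n : ℕ) (p s : ℝ) (Ω : Set (Rn n)) (V u : Rn n → ℝ) : Prop :=
  MemX0 n p s Ω u ∧ MemLpV n p Ω V u

/-- Membership in `Y^{s,p}_g(Ω)^+`. -/
def MemYgPlus (n : ℕ) (p s : ℝ) (Ω : Set (Rn n)) (V g u : Rn n → ℝ) : Prop :=
  MemY n p s Ω V u ∧ MemY0 n p s Ω V (fun x => max (g x - u x) 0)

/-- Membership in `Y^{s,p}_g(Ω)^-`. -/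
def MemYgMinus (n : ℕ) (p s : ℝ) (Ω : Set (Rn n)) (V g u : Rn n → ℝ) : Prop :=
  MemY n p s Ω V u ∧ MemY0 n p s Ω V (fun x => max (u x - g x) 0)

/-- Membership in `Y^{s,p}_g(Ω)`. -/
def MemYg (n : ℕ) (p s : ℝ) (Ω : Set (Rn n)) (V g u : Rn n → ℝ) : Prop :=
  MemYgPlus n p s Ω V g u ∧ MemYgMinus n p s Ω V g u

/-- The pairing `⟨u,φ⟩_{H_p,K}`. -/
def pairing (n : ℕ) (p : ℝ) (K u φ : Rn n → ℝ) : ℝ :=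
  ∫ z : Rn n × Rn n, Hp p (u z.1 - u z.2) * (φ z.1 - φ z.2) * K (z.1 - z.2)

/-- `u` is a weak subsolution of `L^p_K u + V|u|^{p-2}u = 0` in `Ω` with exterior data `g`. -/
def WeakSubsolution (n : ℕ) (p s : ℝ) (Ω : Set (Rn n)) (K V g u : Rn n → ℝ) : Prop :=
  MemYgMinus n p s Ω V g u ∧
    ∀ φ : Rn n → ℝ, MemY0 n p s Ω V φ → (∀ x, 0 ≤ φ x) →
      pairing n p K u φ + ∫ x : Rn n, V x * (|u x| ^ (p - 2) * u x) * φ x ≤ 0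

/-- `u` is a weak supersolution of `L^p_K u + V|u|^{p-2}u = 0` in `Ω` with exterior data `g`. -/
def WeakSupersolution (n : ℕ) (p s : ℝ) (Ω : Set (Rn n)) (K V g u : Rn n → ℝ) : Prop :=
  MemYgPlus n p s Ω V g u ∧
    ∀ φ : Rn n → ℝ, MemY0 n p s Ω V φ → (∀ x, 0 ≤ φ x) →
      0 ≤ pairing n p K u φ + ∫ x : Rn n, V x * (|u x| ^ (p - 2) * u x) * φ x

/-- `u` is a weak solution of `L^p_K u + V|u|^{p-2}u = 0` in `Ω` with exterior data `g`. -/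
def WeakSolution (n : ℕ) (p s : ℝ) (Ω : Set (Rn n)) (K V g u : Rn n → ℝ) : Prop :=
  MemYg n p s Ω V g u ∧
    ∀ φ : Rn n → ℝ, MemY0 n p s Ω V φ →
      pairing n p K u φ + ∫ x : Rn n, V x * (|u x| ^ (p - 2) * u x) * φ x = 0

/-- The surface measure `|S^{n-1}|` of the unit sphere of `ℝⁿ`. -/
def sphereArea (n : ℕ) : ℝ := n * (volume (Metric.ball (0 : Rn n) 1)).toReal

/-- The nonlocal tail `𝒯_r(u;x₀)`. -/
def tail (n : ℕ) (p s : ℝ) (u : Rn n → ℝ) (x₀ : Rn n) (r : ℝ) : ℝ :=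
  (p * s / sphereArea n * r ^ (p * s) *
      ∫ y in (Metric.ball x₀ r)ᶜ, |u y| ^ (p - 1) * ‖y - x₀‖ ^ (-(n : ℝ) - p * s)) ^ (1 / (p - 1))

def supOn {n : ℕ} (u : Rn n → ℝ) (B : Set (Rn n)) : ℝ := sSup (u '' B)
def infOn {n : ℕ} (u : Rn n → ℝ) (B : Set (Rn n)) : ℝ := sInf (u '' B)
def oscOn {n : ℕ} (u : Rn n → ℝ) (B : Set (Rn n)) : ℝ := supOn u B - infOn u B

/-- The `L^q(Ω)` norm, used for `‖V₊‖_{L^q(Ω)}`. -/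
def lqNormOn (n : ℕ) (q : ℝ) (Ω : Set (Rn n)) (f : Rn n → ℝ) : ℝ :=
  (∫ x in Ω, |f x| ^ q) ^ (1 / q)

/-- The Hölder seminorm `[u]_{C^ε(B)}`. -/
def holderSemi {n : ℕ} (ε : ℝ) (B : Set (Rn n)) (u : Rn n → ℝ) : ℝ :=
  sSup ((fun z : Rn n × Rn n => |u z.1 - u z.2| / ‖z.1 - z.2‖ ^ ε) ''
    ((B ×ˢ B) ∩ {z | z.1 ≠ z.2}))

/-- The sup norm `‖u‖_{C(B)}`. -/
def cNorm {n : ℕ} (B : Set (Rn n)) (u : Rn n → ℝ) : ℝ := sSup ((fun x => |u x|) '' B)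

/-- The Hölder norm `‖u‖_{C^ε(B)}`. -/
def holderNorm {n : ℕ} (ε : ℝ) (B : Set (Rn n)) (u : Rn n → ℝ) : ℝ :=
  cNorm B u + holderSemi ε B u

/-- `u` is locally `ε`-Hölder continuous in `Ω`. -/
def LocallyHolder {n : ℕ} (ε : ℝ) (Ω : Set (Rn n)) (u : Rn n → ℝ) : Prop :=
  ∀ (x₀ : Rn n) (r : ℝ), closure (Metric.ball x₀ r) ⊆ Ω →
    ∃ L : ℝ, ∀ x ∈ Metric.ball x₀ r, ∀ y ∈ Metric.ball x₀ r, |u x - u y| ≤ L * ‖x - y‖ ^ ε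

end NLS

open NLS

theorem aux_hp_abs (p t : ℝ) (hp : 1 < p) : |Hp p t| = |t| ^ (p - 1) := by
  unfold Hp
  rw [abs_mul, abs_of_nonneg (rpow_nonneg (abs_nonneg t) _)]
  rcases eq_or_ne t 0 with h | h
  · subst h; simp; rw [zero_rpow (by linarith)]
  · have : 0 < |t| := abs_pos.mpr h
    nth_rewrite 2 [← rpow_one |t|]
    rw [← rpow_add this]; congr 1; ring

theorem aux_hp_nonneg (p t : ℝ) (hp : 1 < p) (ht : 0 ≤ t) : Hp p t = t ^ (p - 1) := by
  have h := aux_hp_abs p t hp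
  rw [abs_of_nonneg ht, abs_of_nonneg] at h
  · exact h
  · unfold Hp; positivity

theorem aux_hp_neg (p t : ℝ) : Hp p (-t) = - Hp p t := by
  unfold Hp; rw [abs_neg]; ring

/-- Discrete Picone inequality, ordered case. -/
theorem aux_picone_le (p a d α β : ℝ) (hp : 1 < p) (hd : 0 < d) (hda : d ≤ a)
    (hα : 0 ≤ α) (hβ : 0 ≤ β) :
    (a - d) ^ (p - 1) * (α ^ p * a ^ (1 - p) - β ^ p * d ^ (1 - p)) ≤ |α - β| ^ p := by
  have ha : 0 < a := lt_of_lt_of_le hd hda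
  rcases eq_or_lt_of_le hda with h | h
  · subst h
    rw [sub_self, zero_rpow (by linarith), zero_mul]; positivity
  rcases le_total α β with hab | hab
  · have h1 : α ^ p * a ^ (1 - p) ≤ β ^ p * d ^ (1 - p) := by
      apply mul_le_mul (rpow_le_rpow hα hab (by linarith)) _ (by positivity) (by positivity)
      exact rpow_le_rpow_of_nonpos hd hda (by linarith)
    have h2 : 0 ≤ (a - d) ^ (p - 1) := rpow_nonneg (by linarith) _
    have h3 : 0 ≤ |α - β| ^ p := by positivity
    nlinarith
  · rw [abs_of_nonneg (by linarith)]
    -- convexity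
    have had : 0 < a - d := by linarith
    have hc0 : ∀ x y t u : ℝ, 0 ≤ x → 0 ≤ y → 0 ≤ t → 0 ≤ u → t + u = 1 →
        (t * x + u * y) ^ p ≤ t * x ^ p + u * y ^ p := by
      intro x y t u hx hy ht hu htu
      have := (convexOn_rpow (le_of_lt hp)).2 (Set.mem_Ici.mpr hx) (Set.mem_Ici.mpr hy) ht hu htu
      simpa only [smul_eq_mul] using this
    have hc := hc0 (β * a / d) ((α - β) * a / (a - d)) (d / a) ((a - d) / a)
      (by positivity) (by have : 0 ≤ α - β := by linarith
                          positivity)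
      (by positivity) (by positivity) (by field_simp; ring)
    have e1 : d / a * (β * a / d) + (a - d) / a * ((α - β) * a / (a - d)) = α := by
      field_simp; ring
    rw [e1] at hc
    have hαβ : 0 ≤ α - β := by linarith
    have e2 : d / a * (β * a / d) ^ p = β ^ p * (a ^ (p - 1) * d ^ (1 - p)) := by
      rw [div_rpow (by positivity) hd.le, mul_rpow hβ ha.le, rpow_sub ha, rpow_sub hd]
      simp only [Real.rpow_one]
      field_simp
    have e3 : (a - d) / a * ((α - β) * a / (a - d)) ^ p
        = (α - β) ^ p * (a ^ (p - 1) * (a - d) ^ (1 - p)) := by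
      rw [div_rpow (by positivity) had.le, mul_rpow hαβ ha.le, rpow_sub ha, rpow_sub had]
      simp only [Real.rpow_one]
      field_simp
    rw [e2, e3] at hc
    have i1 : a ^ (p - 1) * a ^ (1 - p) = 1 := by
      rw [← rpow_add ha]; simp
    have i2 : (a - d) ^ (p - 1) * (a - d) ^ (1 - p) = 1 := by
      rw [← rpow_add had]; simp
    have hA : 0 ≤ (a - d) ^ (p - 1) * a ^ (1 - p) := by positivity
    have := mul_le_mul_of_nonneg_left hc hA
    calc _ = (a - d) ^ (p - 1) * a ^ (1 - p) * α ^ p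
            - (a - d) ^ (p - 1) * (β ^ p * d ^ (1 - p)) := by ring
      _ ≤ (a - d) ^ (p - 1) * a ^ (1 - p) * (β ^ p * (a ^ (p - 1) * d ^ (1 - p)) +
            (α - β) ^ p * (a ^ (p - 1) * (a - d) ^ (1 - p)))
            - (a - d) ^ (p - 1) * (β ^ p * d ^ (1 - p)) := by linarith
      _ = (a - d) ^ (p - 1) * (β ^ p * d ^ (1 - p)) * (a ^ (p - 1) * a ^ (1 - p)) +
            (α - β) ^ p * (a ^ (p - 1) * a ^ (1 - p)) * ((a - d) ^ (p - 1) * (a - d) ^ (1 - p))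
            - (a - d) ^ (p - 1) * (β ^ p * d ^ (1 - p)) := by ring
      _ = _ := by rw [i1, i2]; ring

theorem aux_picone (p a d α β : ℝ) (hp : 1 < p) (ha : 0 < a) (hd : 0 < d)
    (hα : 0 ≤ α) (hβ : 0 ≤ β) :
    Hp p (a - d) * (α ^ p * a ^ (1 - p) - β ^ p * d ^ (1 - p)) ≤ |α - β| ^ p := by
  rcases le_total d a with h | h
  · rw [aux_hp_nonneg p _ hp (by linarith)]
    exact aux_picone_le p a d α β hp hd h hα hβ
  · have := aux_picone_le p d a β α hp ha h hβ hα
    rw [← neg_sub d a, aux_hp_neg, aux_hp_nonneg p _ hp (by linarith), abs_sub_comm]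
    linarith

theorem aux_log_le (p a d : ℝ) (hp : 1 < p) (hd : 0 < d) (hda : d ≤ a) :
    (a - d) ^ (p - 1) * (a ^ (1 - p) - d ^ (1 - p)) ≤ -((p - 1) * |log (a / d)| ^ p) := by
  have ha : 0 < a := lt_of_lt_of_le hd hda
  have hm : 0 < p - 1 := by linarith
  set l := log (a / d) with hl
  have hl0 : 0 ≤ l := log_nonneg (by rw [le_div_iff₀ hd]; linarith)
  have hae : a = d * exp l := by rw [hl, exp_log (by positivity)]; field_simp
  have s1 : l ≤ 2 * sinh (l / 2) := by
    have := self_le_sinh_iff.mpr (show 0 ≤ l / 2 by positivity); linarith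
  have s2 : (p - 1) * l ≤ 2 * sinh ((p - 1) * l / 2) := by
    have := self_le_sinh_iff.mpr (show 0 ≤ (p - 1) * l / 2 by positivity); linarith
  have t1 : a - d = d * (exp (l / 2) * (2 * sinh (l / 2))) := by
    rw [hae, sinh_eq]
    have : exp l = exp (l / 2) * exp (l / 2) := by rw [← exp_add]; ring_nf
    rw [this]
    have : exp (l / 2) * exp (- (l / 2)) = 1 := by rw [← exp_add]; simp
    linear_combination d * this
  have sh0 : 0 ≤ 2 * sinh (l / 2) := le_trans hl0 s1
  have t2 : (a - d) ^ (p - 1) = d ^ (p - 1) * (exp ((p - 1) * l / 2) * (2 * sinh (l / 2)) ^ (p - 1)) := by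
    rw [t1, mul_rpow hd.le (by positivity), mul_rpow (exp_pos _).le sh0, ← exp_mul]
    ring_nf
  have t3 : a ^ (1 - p) - d ^ (1 - p) = - (d ^ (1 - p) * (exp (-((p - 1) * l / 2)) * (2 * sinh ((p - 1) * l / 2)))) := by
    rw [hae, mul_rpow hd.le (exp_pos _).le, ← exp_mul, sinh_eq]
    have h1 : exp (l * (1 - p)) = exp (-((p - 1) * l / 2)) * exp (-((p - 1) * l / 2)) := by
      rw [← exp_add]; ring_nf
    have h2 : exp ((p - 1) * l / 2) * exp (-((p - 1) * l / 2)) = 1 := by rw [← exp_add]; simp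
    rw [h1]
    linear_combination d ^ (1 - p) * h2
  have i1 : d ^ (p - 1) * d ^ (1 - p) = 1 := by rw [← rpow_add hd]; simp
  have h2 : exp ((p - 1) * l / 2) * exp (-((p - 1) * l / 2)) = 1 := by rw [← exp_add]; simp
  have e : (a - d) ^ (p - 1) * (a ^ (1 - p) - d ^ (1 - p))
      = - ((2 * sinh (l / 2)) ^ (p - 1) * (2 * sinh ((p - 1) * l / 2))) := by
    rw [t2, t3]
    linear_combination (-(2 * sinh (l / 2)) ^ (p - 1) * (2 * sinh ((p - 1) * l / 2)) * (exp ((p - 1) * l / 2) * exp (-((p - 1) * l / 2)))) * i1 + (-(2 * sinh (l / 2)) ^ (p - 1) * (2 * sinh ((p - 1) * l / 2))) * h2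
  rw [e, abs_of_nonneg hl0]
  have e4 : (p - 1) * l ^ p = l ^ (p - 1) * ((p - 1) * l) := by
    rcases eq_or_lt_of_le hl0 with h | h
    · rw [← h, zero_rpow (by linarith)]; simp
    · rw [Real.rpow_sub h, Real.rpow_one]; field_simp
  rw [e4]
  apply neg_le_neg
  exact mul_le_mul (rpow_le_rpow hl0 s1 hm.le) s2 (by positivity) (by positivity)

theorem aux_log (p a d : ℝ) (hp : 1 < p) (ha : 0 < a) (hd : 0 < d) :
    Hp p (a - d) * (a ^ (1 - p) - d ^ (1 - p)) ≤ -((p - 1) * |log (a / d)| ^ p) := by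
  rcases le_total d a with h | h
  · rw [aux_hp_nonneg p _ hp (by linarith)]
    exact aux_log_le p a d hp hd h
  · have := aux_log_le p d a hp ha h
    rw [← neg_sub d a, aux_hp_neg, aux_hp_nonneg p _ hp (by linarith), ← abs_neg, ← Real.log_inv, inv_div]
    linarith

theorem aux_add_rpow (m a b : ℝ) (hm : 0 ≤ m) (ha : 0 ≤ a) (hb : 0 ≤ b) :
    (a + b) ^ m ≤ 2 ^ m * (a ^ m + b ^ m) := by
  have h : a + b ≤ 2 * max a b := by
    have := le_max_left a b; have := le_max_right a b; linarith
  calc (a + b) ^ m ≤ (2 * max a b) ^ m := rpow_le_rpow (by positivity) h hm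
    _ = 2 ^ m * (max a b) ^ m := mul_rpow (by norm_num) (by positivity)
    _ ≤ _ := by
      apply mul_le_mul_of_nonneg_left _ (by positivity)
      rcases max_choice a b with h | h <;> rw [h]
      · have := rpow_nonneg hb m; linarith
      · have := rpow_nonneg ha m; linarith

theorem aux_far (p U W b α : ℝ) (hp : 1 < p) (hU : 0 ≤ U) (hW : 0 ≤ W) (hb : 0 < b)
    (hα : 0 ≤ α) :
    Hp p (U + W) * (α ^ p * (U + b) ^ (1 - p)) ≤
      2 ^ (p - 1) * (α ^ p + b ^ (1 - p) * (W ^ (p - 1) * α ^ p)) := by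
  rw [aux_hp_nonneg p _ hp (by linarith)]
  have hUb : 0 < U + b := by linarith
  have h1 := aux_add_rpow (p - 1) U W (by linarith) hU hW
  have h2 : U ^ (p - 1) * (U + b) ^ (1 - p) ≤ 1 := by
    have : (U + b) ^ (p - 1) * (U + b) ^ (1 - p) = 1 := by rw [← rpow_add hUb]; simp
    have h4 : U ^ (p - 1) ≤ (U + b) ^ (p - 1) := rpow_le_rpow hU (by linarith) (by linarith)
    calc _ ≤ (U + b) ^ (p - 1) * (U + b) ^ (1 - p) := mul_le_mul_of_nonneg_right h4 (by positivity)
      _ = 1 := this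
  have h3 : (U + b) ^ (1 - p) ≤ b ^ (1 - p) :=
    rpow_le_rpow_of_nonpos hb (by linarith) (by linarith)
  calc (U + W) ^ (p - 1) * (α ^ p * (U + b) ^ (1 - p))
      ≤ 2 ^ (p - 1) * (U ^ (p - 1) + W ^ (p - 1)) * (α ^ p * (U + b) ^ (1 - p)) :=
        mul_le_mul_of_nonneg_right h1 (by positivity)
    _ = 2 ^ (p - 1) * (α ^ p * (U ^ (p - 1) * (U + b) ^ (1 - p)) + (U + b) ^ (1 - p) * (W ^ (p - 1) * α ^ p)) := by ring
    _ ≤ 2 ^ (p - 1) * (α ^ p * 1 + b ^ (1 - p) * (W ^ (p - 1) * α ^ p)) := by gcongr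
    _ = _ := by ring

/-- Lipschitz bounds. -/
theorem aux_lip_pow (p α β : ℝ) (hp : 1 < p) (hα : 0 ≤ α) (hβ : 0 ≤ β) (hα1 : α ≤ 1) (hβ1 : β ≤ 1) :
    |α ^ p - β ^ p| ≤ p * |α - β| := by
  have := (convex_Icc (0:ℝ) 1).norm_image_sub_le_of_norm_hasDerivWithin_le
    (f := fun x : ℝ => x ^ p) (f' := fun x => p * x ^ (p - 1)) (C := p)
    (fun x hx => (Real.hasDerivAt_rpow_const (Or.inr hp.le)).hasDerivWithinAt)
    (fun x hx => by
      rw [Real.norm_eq_abs, abs_of_nonneg (by have := hx.1; positivity)]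
      have : x ^ (p - 1) ≤ 1 := rpow_le_one hx.1 hx.2 (by linarith)
      nlinarith) (x := β) (y := α) ⟨hβ, hβ1⟩ ⟨hα, hα1⟩
  simpa using this

theorem aux_lip_neg (p a d b : ℝ) (hp : 1 < p) (hb : 0 < b) (ha : b ≤ a) (hd : b ≤ d) :
    |a ^ (1 - p) - d ^ (1 - p)| ≤ (p - 1) * b ^ (-p) * |a - d| := by
  have := (convex_Ici b).norm_image_sub_le_of_norm_hasDerivWithin_le
    (f := fun x : ℝ => x ^ (1 - p)) (f' := fun x => (1 - p) * x ^ (1 - p - 1)) (C := (p - 1) * b ^ (-p))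
    (fun x hx => (Real.hasDerivAt_rpow_const (Or.inl (lt_of_lt_of_le hb hx).ne')).hasDerivWithinAt)
    (fun x hx => by
      have hx0 : 0 < x := lt_of_lt_of_le hb hx
      rw [Real.norm_eq_abs, abs_mul, abs_of_neg (by linarith), abs_of_pos (by positivity)]
      have : x ^ (1 - p - 1) ≤ b ^ (-p) := by
        rw [show 1 - p - 1 = -p by ring]
        exact rpow_le_rpow_of_nonpos hb hx (by linarith)
      nlinarith) (x := d) (y := a) hd ha
  simpa using this

theorem aux_young (p a b : ℝ) (hp : 1 < p) (ha : 0 ≤ a) (hb : 0 ≤ b) :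
    a ^ (p - 1) * b ≤ a ^ p + b ^ p := by
  have key : ∀ c : ℝ, 0 ≤ c → c ^ (p - 1) * c = c ^ p := by
    intro c hc
    rcases eq_or_lt_of_le hc with h | h
    · rw [← h, zero_rpow (by linarith : p ≠ 0)]; simp
    · rw [Real.rpow_sub h, Real.rpow_one]; field_simp
  have := rpow_nonneg ha p
  have := rpow_nonneg hb p
  rcases le_total a b with h | h
  · have : a ^ (p - 1) * b ≤ b ^ (p - 1) * b :=
      mul_le_mul_of_nonneg_right (rpow_le_rpow ha h (by linarith)) hb
    rw [key b hb] at this; linarith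
  · have : a ^ (p - 1) * b ≤ a ^ (p - 1) * a :=
      mul_le_mul_of_nonneg_left h (by positivity)
    rw [key a ha] at this; linarith

def auxh (n : ℕ) (p s r : ℝ) (z : Rn n) : ℝ :=
  (min 1 (2 / r * ‖z‖)) ^ p * ‖z‖ ^ (-(n : ℝ) - p * s)

theorem auxh_nonneg (n : ℕ) (p s r : ℝ) (hr : 0 < r) (z : Rn n) : 0 ≤ auxh n p s r z := by
  unfold auxh
  have : 0 ≤ min 1 (2 / r * ‖z‖) := le_min zero_le_one (by positivity)
  positivity

theorem auxh_one_integrable (n : ℕ) (hn : 1 ≤ n) (p s : ℝ) (hp : 1 < p) (hs0 : 0 < s) (hs1 : s < 1) :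
    Integrable (auxh n p s 1) := by
  have : Nontrivial (Rn n) := by
    have : Nonempty (Fin n) := ⟨⟨0, by omega⟩⟩
    infer_instance
  have hps : 0 < p * s := by positivity
  have hps1 : p * s < p := by nlinarith
  set f : ℝ → ℝ := fun t => (min 1 (2 / 1 * t)) ^ p * t ^ (-(n : ℝ) - p * s) with hf
  have hfm : Measurable f := by
    rw [hf]; fun_prop
  have key := (integrable_fun_norm_addHaar (E := Rn n) (volume : Measure (Rn n)) (f := f)).mpr ?_
  · exact key
  have hdim : Module.finrank ℝ (Rn n) = n := by simp
  rw [hdim]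
  have hpow : ∀ y : ℝ, 0 < y → y ^ (n - 1) = y ^ ((n : ℝ) - 1) := by
    intro y hy
    rw [← Real.rpow_natCast, Nat.cast_sub hn, Nat.cast_one]
  have hU : Set.Ioi (0:ℝ) = Set.Ioc 0 1 ∪ Set.Ioi 1 := (Set.Ioc_union_Ioi_eq_Ioi zero_le_one).symm
  rw [hU]
  have hmeas : Measurable (fun y : ℝ => y ^ (n - 1) • f y) := by
    simp only [smul_eq_mul]; fun_prop
  apply IntegrableOn.union
  · have h1 : IntegrableOn (fun y : ℝ => 2 ^ p * y ^ (p - p * s - 1)) (Set.Ioc 0 1) := by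
      apply Integrable.const_mul
      have := (intervalIntegral.integrableOn_Ioo_rpow_iff (s := p - p * s - 1) zero_lt_one).mpr
        (by linarith)
      exact (integrableOn_Ioc_iff_integrableOn_Ioo).mpr this
    refine Integrable.mono' h1 hmeas.aestronglyMeasurable ?_
    refine (ae_restrict_mem measurableSet_Ioc).mono fun y hy => ?_
    have hy0 : 0 < y := hy.1
    have hm : 0 ≤ min 1 (2 / 1 * y) := le_min zero_le_one (by positivity)
    have hn0 : 0 ≤ y ^ (n - 1) • f y := by simp only [hf, smul_eq_mul]; positivity
    rw [Real.norm_eq_abs, abs_of_nonneg hn0]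
    simp only [hf, smul_eq_mul]
    rw [hpow y hy0]
    calc y ^ ((n : ℝ) - 1) * (min 1 (2 / 1 * y) ^ p * y ^ (-(n : ℝ) - p * s))
        ≤ y ^ ((n : ℝ) - 1) * ((2 * y) ^ p * y ^ (-(n : ℝ) - p * s)) := by
          gcongr
          exact (min_le_right _ _).trans (by linarith)
      _ = 2 ^ p * (y ^ ((n : ℝ) - 1) * y ^ p * y ^ (-(n : ℝ) - p * s)) := by
          rw [Real.mul_rpow (by norm_num) hy0.le]; ring
      _ = _ := by
          rw [← Real.rpow_add hy0, ← Real.rpow_add hy0]; ring_nf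
  · have h1 : IntegrableOn (fun y : ℝ => y ^ (-1 - p * s)) (Set.Ioi 1) :=
      integrableOn_Ioi_rpow_of_lt (by linarith) zero_lt_one
    refine Integrable.mono' h1 hmeas.aestronglyMeasurable ?_
    refine (ae_restrict_mem measurableSet_Ioi).mono fun y hy => ?_
    have hy0 : 0 < y := lt_trans zero_lt_one hy
    have hm : 0 ≤ min 1 (2 / 1 * y) := le_min zero_le_one (by positivity)
    have hn0 : 0 ≤ y ^ (n - 1) • f y := by simp only [hf, smul_eq_mul]; positivity
    rw [Real.norm_eq_abs, abs_of_nonneg hn0]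
    simp only [hf, smul_eq_mul]
    rw [hpow y hy0]
    have h2 : min 1 (2 / 1 * y) ^ p ≤ 1 := Real.rpow_le_one hm (min_le_left _ _) (by linarith)
    calc y ^ ((n : ℝ) - 1) * (min 1 (2 / 1 * y) ^ p * y ^ (-(n : ℝ) - p * s))
        ≤ y ^ ((n : ℝ) - 1) * (1 * y ^ (-(n : ℝ) - p * s)) := by gcongr
      _ = _ := by
          rw [one_mul, ← Real.rpow_add hy0]; ring_nf

theorem auxh_scale (n : ℕ) (p s r : ℝ) (hr : 0 < r) (z : Rn n) :
    auxh n p s r z = r ^ (-(n : ℝ) - p * s) * auxh n p s 1 (r⁻¹ • z) := by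
  unfold auxh
  rw [norm_smul, Real.norm_eq_abs, abs_of_pos (inv_pos.mpr hr),
    Real.mul_rpow (inv_pos.mpr hr).le (norm_nonneg _), Real.inv_rpow hr.le]
  have : r ^ (-(n : ℝ) - p * s) ≠ 0 := by positivity
  field_simp

theorem auxh_integrable (n : ℕ) (hn : 1 ≤ n) (p s r : ℝ) (hp : 1 < p) (hs0 : 0 < s) (hs1 : s < 1)
    (hr : 0 < r) : Integrable (auxh n p s r) := by
  have : auxh n p s r = fun z => r ^ (-(n : ℝ) - p * s) * auxh n p s 1 (r⁻¹ • z) :=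
    funext (auxh_scale n p s r hr)
  rw [this]
  apply Integrable.const_mul
  exact (integrable_comp_smul_iff volume _ (inv_pos.mpr hr).ne').mpr
    (auxh_one_integrable n hn p s hp hs0 hs1)

theorem auxh_integral (n : ℕ) (p s r : ℝ) (hr : 0 < r) :
    ∫ z, auxh n p s r z = r ^ (-(p * s)) * ∫ z, auxh n p s 1 z := by
  have : auxh n p s r = fun z => r ^ (-(n : ℝ) - p * s) * auxh n p s 1 (r⁻¹ • z) :=
    funext (auxh_scale n p s r hr)
  rw [this, integral_const_mul, Measure.integral_comp_smul]
  have hdim : Module.finrank ℝ (Rn n) = n := by simp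
  rw [hdim, smul_eq_mul, ← mul_assoc]
  congr 1
  rw [inv_pow, inv_inv, abs_of_pos (by positivity), ← Real.rpow_natCast, ← Real.rpow_add hr]
  ring_nf

def auxD (n : ℕ) (p s r : ℝ) (B : Set (Rn n)) (z : Rn n × Rn n) : ℝ :=
  B.indicator (fun _ => (1:ℝ)) z.1 * auxh n p s r (z.2 - z.1) +
  B.indicator (fun _ => (1:ℝ)) z.2 * auxh n p s r (z.1 - z.2)

theorem auxD_facts (n : ℕ) (hn : 1 ≤ n) (p s r : ℝ) (hp : 1 < p) (hs0 : 0 < s) (hs1 : s < 1)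
    (hr : 0 < r) (B : Set (Rn n)) (hB : MeasurableSet B) (hBf : volume B ≠ ⊤) :
    Integrable (auxD n p s r B) ∧
      ∫ z, auxD n p s r B z = 2 * (volume.real B * (r ^ (-(p * s)) * ∫ z, auxh n p s 1 z)) := by
  have hi : Integrable (B.indicator (fun _ => (1:ℝ))) :=
    (integrable_indicator_iff hB).mpr (integrableOn_const hBf)
  have hh := auxh_integrable n hn p s r hp hs0 hs1 hr
  have h0 : Integrable (fun z : Rn n × Rn n => B.indicator (fun _ => (1:ℝ)) z.1 * auxh n p s r z.2) :=
    hi.mul_prod hh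
  have hT := measurePreserving_prod_sub (volume : Measure (Rn n)) (volume : Measure (Rn n))
  have h1 : Integrable (fun z : Rn n × Rn n =>
      B.indicator (fun _ => (1:ℝ)) z.1 * auxh n p s r (z.2 - z.1)) :=
    hT.integrable_comp_of_integrable h0
  have e1 : ∫ z : Rn n × Rn n, B.indicator (fun _ => (1:ℝ)) z.1 * auxh n p s r (z.2 - z.1)
      = volume.real B * (r ^ (-(p * s)) * ∫ z, auxh n p s 1 z) := by
    have a1 := integral_map (μ := (volume : Measure (Rn n)).prod volume) hT.measurable.aemeasurable
      (f := fun z : Rn n × Rn n => B.indicator (fun _ => (1:ℝ)) z.1 * auxh n p s r z.2)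
      (by rw [hT.map_eq]; exact h0.aestronglyMeasurable)
    rw [hT.map_eq] at a1
    have a2 := integral_prod_mul (μ := (volume : Measure (Rn n))) (ν := (volume : Measure (Rn n)))
      (B.indicator (fun _ => (1:ℝ))) (auxh n p s r)
    rw [a2, integral_indicator hB, auxh_integral n p s r hr] at a1
    simp only [integral_const, smul_eq_mul, mul_one] at a1
    simp only [measureReal_restrict_apply_univ] at a1
    exact a1.symm
  have h2 : Integrable (fun z : Rn n × Rn n =>
      B.indicator (fun _ => (1:ℝ)) z.2 * auxh n p s r (z.1 - z.2)) := h1.swap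
  have e2 : ∫ z : Rn n × Rn n, B.indicator (fun _ => (1:ℝ)) z.2 * auxh n p s r (z.1 - z.2)
      = volume.real B * (r ^ (-(p * s)) * ∫ z, auxh n p s 1 z) := by
    rw [← e1]
    exact integral_prod_swap (μ := (volume : Measure (Rn n))) (ν := (volume : Measure (Rn n)))
      (fun z : Rn n × Rn n => B.indicator (fun _ => (1:ℝ)) z.1 * auxh n p s r (z.2 - z.1))
  refine ⟨h1.add h2, ?_⟩
  have := integral_add h1 h2
  unfold auxD
  rw [this, e1, e2]; ring

theorem aux_scalar (p U W b α β : ℝ) (hp : 1 < p) (hb : 0 < b) (hα : 0 ≤ α) (hβ : 0 ≤ β)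
    (hU : U < 0 → α = 0) (hW : W < 0 → β = 0) :
    Hp p (U - W) * (α ^ p * (max U 0 + b) ^ (1 - p) - β ^ p * (max W 0 + b) ^ (1 - p)) ≤
      2 ^ (p - 1) * |α - β| ^ p + 2 ^ (p - 1) * b ^ (1 - p) *
        ((max (-W) 0) ^ (p - 1) * α ^ p + (max (-U) 0) ^ (p - 1) * β ^ p) := by
  have h2 : (1:ℝ) ≤ 2 ^ (p - 1) := Real.one_le_rpow (by norm_num) (by linarith)
  have hz : (0:ℝ) ^ p = 0 := Real.zero_rpow (by linarith)
  rcases lt_or_ge U 0 with h1 | h1 <;> rcases lt_or_ge W 0 with h3 | h3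
  · rw [hU h1, hW h3, hz]
    simp only [zero_mul, sub_self, mul_zero, abs_zero, hz, add_zero, le_refl]
  · have ha := hU h1
    have := aux_far p W (-U) b β hp h3 (by linarith) hb hβ
    rw [ha, hz, max_eq_left h3, max_eq_left (a := -U) (by linarith), ← neg_sub W U, aux_hp_neg,
      zero_sub, abs_neg, abs_of_nonneg hβ]
    rw [← sub_eq_add_neg] at this
    simp only [zero_mul, mul_zero, zero_add, zero_sub]
    linarith
  · have ha := hW h3
    have := aux_far p U (-W) b α hp h1 (by linarith) hb hα
    rw [ha, hz, max_eq_left h1, max_eq_left (a := -W) (by linarith),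
      sub_zero, abs_of_nonneg hα]
    rw [← sub_eq_add_neg] at this
    simp only [zero_mul, mul_zero, add_zero, sub_zero]
    linarith
  · have := aux_picone p (U + b) (W + b) α β hp (by linarith) (by linarith) hα hβ
    rw [add_sub_add_right_eq_sub] at this
    rw [max_eq_left h1, max_eq_left h3]
    have h4 : 0 ≤ |α - β| ^ p := by positivity
    have h5 : 0 ≤ 2 ^ (p - 1) * b ^ (1 - p) *
        ((max (-W) 0) ^ (p - 1) * α ^ p + (max (-U) 0) ^ (p - 1) * β ^ p) := by positivity
    nlinarith

def auxpsi {n : ℕ} (x₀ : Rn n) (r : ℝ) (x : Rn n) : ℝ := max 0 (min 1 (3 - 2 / r * ‖x - x₀‖))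

theorem auxpsi_nonneg {n : ℕ} (x₀ : Rn n) (r : ℝ) (x : Rn n) : 0 ≤ auxpsi x₀ r x := le_max_left _ _

theorem auxpsi_le_one {n : ℕ} (x₀ : Rn n) (r : ℝ) (x : Rn n) : auxpsi x₀ r x ≤ 1 :=
  max_le zero_le_one (min_le_left _ _)

theorem auxpsi_one {n : ℕ} (x₀ : Rn n) (r : ℝ) (hr : 0 < r) (x : Rn n) (hx : x ∈ ball x₀ r) :
    auxpsi x₀ r x = 1 := by
  rw [mem_ball_iff_norm] at hx
  have : 2 / r * ‖x - x₀‖ ≤ 2 := by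
    rw [div_mul_eq_mul_div, div_le_iff₀ hr]; linarith
  unfold auxpsi
  rw [min_eq_left (by linarith), max_eq_right zero_le_one]

theorem auxpsi_zero {n : ℕ} (x₀ : Rn n) (r : ℝ) (hr : 0 < r) (x : Rn n)
    (hx : x ∉ ball x₀ (3 / 2 * r)) : auxpsi x₀ r x = 0 := by
  rw [mem_ball_iff_norm, not_lt] at hx
  have : 3 ≤ 2 / r * ‖x - x₀‖ := by
    rw [div_mul_eq_mul_div, le_div_iff₀ hr]; linarith
  unfold auxpsi
  rw [max_eq_left]
  exact (min_le_right _ _).trans (by linarith)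

theorem auxpsi_lip {n : ℕ} (x₀ : Rn n) (r : ℝ) (hr : 0 < r) (x y : Rn n) :
    |auxpsi x₀ r x - auxpsi x₀ r y| ≤ min 1 (2 / r * ‖x - y‖) := by
  apply le_min
  · rw [abs_le]
    constructor <;> linarith [auxpsi_nonneg x₀ r x, auxpsi_nonneg x₀ r y, auxpsi_le_one x₀ r x, auxpsi_le_one x₀ r y]
  · have h1 : |auxpsi x₀ r x - auxpsi x₀ r y| ≤ |(3 - 2 / r * ‖x - x₀‖) - (3 - 2 / r * ‖y - x₀‖)| := by
      unfold auxpsi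
      refine (abs_max_sub_max_le_max _ _ _ _).trans ?_
      simp only [sub_self, abs_zero]
      apply max_le (abs_nonneg _)
      refine (abs_min_sub_min_le_max _ _ _ _).trans ?_
      simp
    refine h1.trans ?_
    have e : (3 - 2 / r * ‖x - x₀‖) - (3 - 2 / r * ‖y - x₀‖) = 2 / r * (‖y - x₀‖ - ‖x - x₀‖) := by ring
    rw [e, abs_mul, abs_of_pos (by positivity)]
    apply mul_le_mul_of_nonneg_left _ (by positivity)
    have := abs_norm_sub_norm_le (y - x₀) (x - x₀)
    rwa [sub_sub_sub_cancel_right, norm_sub_rev y x] at this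

theorem auxpsi_meas {n : ℕ} (x₀ : Rn n) (r : ℝ) : Measurable (auxpsi x₀ r) := by
  unfold auxpsi; fun_prop

theorem auxpsi_D (n : ℕ) (p s r : ℝ) (hp : 1 < p) (hr : 0 < r) (x₀ : Rn n) (z : Rn n × Rn n) :
    |auxpsi x₀ r z.1 - auxpsi x₀ r z.2| ^ p * ‖z.1 - z.2‖ ^ (-(n : ℝ) - p * s) ≤
      auxD n p s r (ball x₀ (3 / 2 * r)) z := by
  have key : |auxpsi x₀ r z.1 - auxpsi x₀ r z.2| ^ p * ‖z.1 - z.2‖ ^ (-(n : ℝ) - p * s) ≤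
      auxh n p s r (z.1 - z.2) := by
    unfold auxh
    apply mul_le_mul_of_nonneg_right _ (by positivity)
    exact Real.rpow_le_rpow (abs_nonneg _) (auxpsi_lip x₀ r hr _ _) (by linarith)
  have hsym : auxh n p s r (z.2 - z.1) = auxh n p s r (z.1 - z.2) := by
    unfold auxh; rw [norm_sub_rev]
  have hn0 := auxh_nonneg n p s r hr (z.1 - z.2)
  unfold auxD
  rw [hsym]
  by_cases h1 : z.1 ∈ ball x₀ (3 / 2 * r) <;> by_cases h2 : z.2 ∈ ball x₀ (3 / 2 * r) <;>
    simp only [Set.indicator, h1, h2, if_true, if_false]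
  · linarith
  · linarith
  · linarith
  · rw [auxpsi_zero x₀ r hr _ h1, auxpsi_zero x₀ r hr _ h2, sub_self, abs_zero,
      Real.zero_rpow (by linarith)]
    simp

def auxphi {n : ℕ} (p b : ℝ) (x₀ : Rn n) (r : ℝ) (u : Rn n → ℝ) (x : Rn n) : ℝ :=
  auxpsi x₀ r x ^ p * (max (u x) 0 + b) ^ (1 - p)

theorem auxphi_nonneg {n : ℕ} (p b : ℝ) (hb : 0 < b) (x₀ : Rn n) (r : ℝ) (u : Rn n → ℝ) (x : Rn n) :
    0 ≤ auxphi p b x₀ r u x := by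
  have := auxpsi_nonneg x₀ r x
  unfold auxphi; positivity

theorem auxphi_le {n : ℕ} (p b : ℝ) (hp : 1 < p) (hb : 0 < b) (x₀ : Rn n) (r : ℝ) (u : Rn n → ℝ) (x : Rn n) :
    auxphi p b x₀ r u x ≤ b ^ (1 - p) := by
  have h0 := auxpsi_nonneg x₀ r x
  have h1 : auxpsi x₀ r x ^ p ≤ 1 := Real.rpow_le_one h0 (auxpsi_le_one x₀ r x) (by linarith)
  have h2 : (max (u x) 0 + b) ^ (1 - p) ≤ b ^ (1 - p) :=
    Real.rpow_le_rpow_of_nonpos hb (by linarith [le_max_right (u x) 0]) (by linarith)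
  unfold auxphi
  calc _ ≤ 1 * b ^ (1 - p) := by gcongr
    _ = _ := one_mul _

theorem auxphi_meas {n : ℕ} (p b : ℝ) (x₀ : Rn n) (r : ℝ) (u : Rn n → ℝ) (hu : Measurable u) :
    Measurable (auxphi p b x₀ r u) := by
  have := auxpsi_meas x₀ r
  unfold auxphi; fun_prop

theorem auxphi_zero {n : ℕ} (p b : ℝ) (hp : 1 < p) (x₀ : Rn n) (r : ℝ) (hr : 0 < r) (u : Rn n → ℝ) (x : Rn n)
    (hx : x ∉ ball x₀ (3 / 2 * r)) : auxphi p b x₀ r u x = 0 := by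
  unfold auxphi
  rw [auxpsi_zero x₀ r hr x hx, Real.zero_rpow (by linarith), zero_mul]

theorem auxphi_gag (n : ℕ) (p s b r : ℝ) (hp : 1 < p) (hb : 0 < b) (hr : 0 < r)
    (x₀ : Rn n) (u : Rn n → ℝ) (z : Rn n × Rn n) :
    gagliardoIntegrand n p s (auxphi p b x₀ r u) z ≤
      2 ^ p * (((p - 1) * b ^ (-p)) ^ p * gagliardoIntegrand n p s u z +
        (b ^ (1 - p) * p) ^ p * auxD n p s r (ball x₀ (3 / 2 * r)) z) := by
  have hD := auxpsi_D n p s r hp hr x₀ z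
  set α := auxpsi x₀ r z.1 with hα
  set β := auxpsi x₀ r z.2 with hβ
  have hα0 : 0 ≤ α := auxpsi_nonneg _ _ _
  have hβ0 : 0 ≤ β := auxpsi_nonneg _ _ _
  have hα1 : α ≤ 1 := auxpsi_le_one _ _ _
  have hβ1 : β ≤ 1 := auxpsi_le_one _ _ _
  set A := max (u z.1) 0 + b with hA
  set E := max (u z.2) 0 + b with hE
  have hA0 : b ≤ A := by linarith [le_max_right (u z.1) 0]
  have hE0 : b ≤ E := by linarith [le_max_right (u z.2) 0]
  have hE1 : 0 < E := by linarith
  have hp0 : 0 < p - 1 := by linarith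
  have l1 := aux_lip_neg p A E b hp hb hA0 hE0
  have l2 := aux_lip_pow p α β hp hα0 hβ0 hα1 hβ1
  have l3 : |A - E| ≤ |u z.1 - u z.2| := by
    have := abs_max_sub_max_le_max (u z.1) 0 (u z.2) 0
    rw [sub_self, abs_zero, max_eq_left (abs_nonneg (u z.1 - u z.2))] at this
    rw [hA, hE, add_sub_add_right_eq_sub]; exact this
  have l4 : E ^ (1 - p) ≤ b ^ (1 - p) := Real.rpow_le_rpow_of_nonpos hb hE0 (by linarith)
  have l5 : α ^ p ≤ 1 := Real.rpow_le_one hα0 hα1 (by linarith)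
  have main : |auxphi p b x₀ r u z.1 - auxphi p b x₀ r u z.2| ≤
      (p - 1) * b ^ (-p) * |u z.1 - u z.2| + b ^ (1 - p) * p * |α - β| := by
    have e : auxphi p b x₀ r u z.1 - auxphi p b x₀ r u z.2 =
        α ^ p * (A ^ (1 - p) - E ^ (1 - p)) + E ^ (1 - p) * (α ^ p - β ^ p) := by
      unfold auxphi; ring
    rw [e]
    refine (abs_add_le _ _).trans ?_
    rw [abs_mul, abs_mul, abs_of_nonneg (Real.rpow_nonneg hα0 p),
      abs_of_nonneg (Real.rpow_nonneg hE1.le _)]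
    apply add_le_add
    · calc α ^ p * |A ^ (1 - p) - E ^ (1 - p)| ≤ 1 * ((p - 1) * b ^ (-p) * |A - E|) := by gcongr
        _ ≤ _ := by rw [one_mul]; gcongr
    · calc E ^ (1 - p) * |α ^ p - β ^ p| ≤ b ^ (1 - p) * (p * |α - β|) := by gcongr
        _ = _ := by ring
  have m2 : |auxphi p b x₀ r u z.1 - auxphi p b x₀ r u z.2| ^ p ≤
      2 ^ p * (((p - 1) * b ^ (-p)) ^ p * |u z.1 - u z.2| ^ p + (b ^ (1 - p) * p) ^ p * |α - β| ^ p) := by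
    refine (Real.rpow_le_rpow (abs_nonneg _) main (by linarith)).trans ?_
    refine (aux_add_rpow p _ _ (by linarith) (by positivity) (by positivity)).trans ?_
    rw [Real.mul_rpow (by positivity) (abs_nonneg _), Real.mul_rpow (by positivity) (abs_nonneg _)]
  unfold gagliardoIntegrand
  have hk : 0 ≤ ‖z.1 - z.2‖ ^ (-(n : ℝ) - p * s) := by positivity
  calc _ ≤ 2 ^ p * (((p - 1) * b ^ (-p)) ^ p * |u z.1 - u z.2| ^ p + (b ^ (1 - p) * p) ^ p * |α - β| ^ p) *
        ‖z.1 - z.2‖ ^ (-(n : ℝ) - p * s) := mul_le_mul_of_nonneg_right m2 hk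
    _ = 2 ^ p * (((p - 1) * b ^ (-p)) ^ p * (|u z.1 - u z.2| ^ p * ‖z.1 - z.2‖ ^ (-(n : ℝ) - p * s)) +
          (b ^ (1 - p) * p) ^ p * (|α - β| ^ p * ‖z.1 - z.2‖ ^ (-(n : ℝ) - p * s))) := by ring
    _ ≤ _ := by gcongr

theorem auxgag_meas (n : ℕ) (p s : ℝ) (u : Rn n → ℝ) (hu : Measurable u) :
    Measurable (gagliardoIntegrand n p s u) := by
  unfold gagliardoIntegrand; fun_prop

theorem auxphi_memX0 (n : ℕ) (hn : 1 ≤ n) (p s b r : ℝ) (hp : 1 < p) (hs0 : 0 < s) (hs1 : s < 1)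
    (hb : 0 < b) (hr : 0 < r) (x₀ : Rn n) (u : Rn n → ℝ) (Ω : Set (Rn n))
    (hΩ : Bornology.IsBounded Ω) (hB : ball x₀ (3 / 2 * r) ⊆ Ω) (hu : MemX n p s Ω u) :
    MemX0 n p s Ω (auxphi p b x₀ r u) := by
  have hm := auxphi_meas p b x₀ r u hu.1
  refine ⟨⟨hm, ?_, ?_⟩, ?_⟩
  · have h1 : IntegrableOn (fun _ : Rn n => (b ^ (1 - p)) ^ p) Ω :=
      integrableOn_const hΩ.measure_lt_top.ne
    have hm2 : Measurable (fun x => |auxphi p b x₀ r u x| ^ p) := by fun_prop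
    refine Integrable.mono' h1 hm2.aestronglyMeasurable (ae_of_all _ fun x => ?_)
    rw [Real.norm_eq_abs, abs_of_nonneg (by positivity)]
    apply Real.rpow_le_rpow (abs_nonneg _) _ (by linarith)
    rw [abs_of_nonneg (auxphi_nonneg p b hb _ _ _ _)]
    exact auxphi_le p b hp hb _ _ _ _
  · have hD := (auxD_facts n hn p s r hp hs0 hs1 hr (ball x₀ (3 / 2 * r)) measurableSet_ball
      measure_ball_lt_top.ne).1
    have h1 : IntegrableOn (fun z => 2 ^ p * (((p - 1) * b ^ (-p)) ^ p * gagliardoIntegrand n p s u z +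
        (b ^ (1 - p) * p) ^ p * auxD n p s r (ball x₀ (3 / 2 * r)) z)) (R2n n Ω) :=
      ((hu.2.2.const_mul _).add (hD.integrableOn.const_mul _)).const_mul _
    refine Integrable.mono' h1 (auxgag_meas n p s _ hm).aestronglyMeasurable (ae_of_all _ fun z => ?_)
    rw [Real.norm_eq_abs, abs_of_nonneg (by unfold gagliardoIntegrand; positivity)]
    exact auxphi_gag n p s b r hp hb hr x₀ u z
  · exact ae_of_all _ fun x hx => auxphi_zero p b hp x₀ r hr u x fun h => hx (hB h)

theorem auxV_int (n : ℕ) (p s q : ℝ) (hq : 1 < q) (V : Rn n → ℝ) (hV : IsPotential n p s q V)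
    (Ω : Set (Rn n)) (hΩ : Bornology.IsBounded Ω) :
    IntegrableOn (plusPart V) Ω ∧ IntegrableOn (minusPart V) Ω ∧
      IntegrableOn (fun x => plusPart V x ^ q) Ω := by
  have hc : IsCompact (closure Ω) := hΩ.isCompact_closure
  have hl : ∀ f : Rn n → ℝ, LocallyIntegrable f → IntegrableOn f Ω := fun f hf =>
    (hf.integrableOn_isCompact hc).mono_set subset_closure
  have hm := hV.measurable
  refine ⟨?_, hl _ hV.minusPart_locInt, hl _ hV.plusPart_locLq⟩
  have h1 : IntegrableOn (fun x => 1 + plusPart V x ^ q) Ω :=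
    (integrableOn_const hΩ.measure_lt_top.ne).add (hl _ hV.plusPart_locLq)
  refine Integrable.mono' h1 (by unfold plusPart; fun_prop) (ae_of_all _ fun x => ?_)
  have h0 : 0 ≤ plusPart V x := le_max_right _ _
  rw [Real.norm_eq_abs, abs_of_nonneg h0]
  rcases le_total (plusPart V x) 1 with h | h
  · have := Real.rpow_nonneg h0 q; linarith
  · have := Real.rpow_le_rpow_of_exponent_le h hq.le
    rw [Real.rpow_one] at this; linarith

theorem auxphi_memLpV (n : ℕ) (p s q b r : ℝ) (hp : 1 < p)
    (hq : 1 < q) (hb : 0 < b) (x₀ : Rn n) (u V : Rn n → ℝ) (hu : Measurable u)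
    (hV : IsPotential n p s q V) (Ω : Set (Rn n)) (hΩ : Bornology.IsBounded Ω) :
    MemLpV n p Ω V (auxphi p b x₀ r u) := by
  obtain ⟨h1, h2, -⟩ := auxV_int n p s q hq V hV Ω hΩ
  have hm := auxphi_meas p b x₀ r u hu
  have hVm := hV.measurable
  have bd : ∀ x, |auxphi p b x₀ r u x| ^ p ≤ (b ^ (1 - p)) ^ p := fun x => by
    apply Real.rpow_le_rpow (abs_nonneg _) _ (by linarith)
    rw [abs_of_nonneg (auxphi_nonneg p b hb _ _ _ _)]
    exact auxphi_le p b hp hb _ _ _ _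
  constructor
  · refine Integrable.mono' (h1.const_mul ((b ^ (1 - p)) ^ p)) (by unfold plusPart; fun_prop) (ae_of_all _ fun x => ?_)
    have h0 : 0 ≤ plusPart V x := le_max_right _ _
    rw [Real.norm_eq_abs, abs_of_nonneg (by positivity)]
    exact mul_le_mul_of_nonneg_right (bd x) h0
  · refine Integrable.mono' (h2.const_mul ((b ^ (1 - p)) ^ p)) (by unfold minusPart; fun_prop) (ae_of_all _ fun x => ?_)
    have h0 : 0 ≤ minusPart V x := le_max_right _ _
    rw [Real.norm_eq_abs, abs_of_nonneg (by positivity)]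
    exact mul_le_mul_of_nonneg_right (bd x) h0

theorem auxc_pos (n : ℕ) (p s : ℝ) (hp : 1 < p) (hs1 : s < 1) : 0 < cnps n p s := by
  unfold cnps
  have h1 : 0 < Real.Gamma (((n : ℝ) + p) / 2) := Real.Gamma_pos_of_pos (by positivity)
  have h2 : 0 < Real.Gamma ((p + 1) / 2) := Real.Gamma_pos_of_pos (by positivity)
  have h3 : 0 < 1 - s := by linarith
  have h4 : 0 < Real.pi ^ (((n : ℝ) - 1) / 2) := Real.rpow_pos_of_pos Real.pi_pos _
  positivity

theorem auxF_int (n : ℕ) (p s lam Lam : ℝ) (hp : 1 < p) (hs1 : s < 1)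
    (hlam : 0 < lam) (hlamLam : lam ≤ Lam)
    (Ω : Set (Rn n)) (K u φ : Rn n → ℝ) (hK : KernelClass n p s lam Lam K)
    (hu : MemX n p s Ω u) (hφ : MemX n p s Ω φ) (hφ0 : ∀ x, x ∉ Ω → φ x = 0) :
    Integrable (fun z : Rn n × Rn n => Hp p (u z.1 - u z.2) * (φ z.1 - φ z.2) * K (z.1 - z.2)) := by
  have hc := auxc_pos n p s hp hs1
  have hum := hu.1
  have hφm := hφ.1
  have hKm := hK.1
  have hm : Measurable (fun z : Rn n × Rn n => Hp p (u z.1 - u z.2) * (φ z.1 - φ z.2) * K (z.1 - z.2)) := by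
    unfold Hp; fun_prop
  rw [← integrableOn_iff_integrable_of_support_subset (s := R2n n Ω)]
  · have h1 : IntegrableOn (fun z => cnps n p s * Lam *
        (gagliardoIntegrand n p s u z + gagliardoIntegrand n p s φ z)) (R2n n Ω) :=
      (hu.2.2.add hφ.2.2).const_mul _
    refine Integrable.mono' h1 hm.aestronglyMeasurable (ae_of_all _ fun z => ?_)
    unfold gagliardoIntegrand
    have hL : 0 < Lam := by linarith
    by_cases hz : z.1 = z.2
    · simp only [hz, sub_self, mul_zero, zero_mul, norm_zero]
      positivity
    · have hne : z.1 - z.2 ≠ 0 := sub_ne_zero.mpr hz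
      obtain ⟨k1, k2⟩ := hK.2.2 _ hne
      have k0 : 0 ≤ K (z.1 - z.2) := le_trans (by positivity) k1
      rw [Real.norm_eq_abs, abs_mul, abs_mul, aux_hp_abs p _ hp, abs_of_nonneg k0]
      have y := aux_young p |u z.1 - u z.2| |φ z.1 - φ z.2| hp (abs_nonneg _) (abs_nonneg _)
      calc _ ≤ (|u z.1 - u z.2| ^ p + |φ z.1 - φ z.2| ^ p) *
              (cnps n p s * Lam * ‖z.1 - z.2‖ ^ (-(n : ℝ) - p * s)) :=
            mul_le_mul y k2 k0 (by positivity)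
        _ = _ := by ring
  · intro z hz
    by_contra h
    apply hz
    simp only [R2n, Set.mem_ofPred_eq, not_or] at h
    simp only [hφ0 _ h.1, hφ0 _ h.2, sub_self, mul_zero, zero_mul]

def auxG (n : ℕ) (p s R : ℝ) (u : Rn n → ℝ) (x₀ : Rn n) : Rn n → ℝ :=
  (ball x₀ R)ᶜ.indicator (fun y => |minusPart u y| ^ (p - 1) * ‖y - x₀‖ ^ (-(n : ℝ) - p * s))

theorem auxG_nonneg (n : ℕ) (p s R : ℝ) (u : Rn n → ℝ) (x₀ y : Rn n) : 0 ≤ auxG n p s R u x₀ y := by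
  unfold auxG
  apply Set.indicator_nonneg
  intro y _; positivity

theorem auxG_int (n : ℕ) (hn : 1 ≤ n) (p s R : ℝ) (hp : 1 < p) (hs0 : 0 < s) (hs1 : s < 1)
    (hR : 0 < R) (u : Rn n → ℝ) (x₀ : Rn n) (Ω : Set (Rn n)) (hu : MemX n p s Ω u)
    (hB : ball x₀ R ⊆ Ω) : Integrable (auxG n p s R u x₀) := by
  have hum := hu.1
  have hps : 0 < p * s := by positivity
  set A := ball x₀ (R / 2) with hA
  have hAΩ : A ⊆ Ω := (ball_subset_ball (by linarith)).trans hB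
  have h1 : IntegrableOn (gagliardoIntegrand n p s u) (A ×ˢ Set.univ) :=
    hu.2.2.mono_set fun z hz => Or.inl (hAΩ hz.1)
  have h2 : Integrable (gagliardoIntegrand n p s u)
      (((volume : Measure (Rn n)).restrict A).prod (volume : Measure (Rn n))) := by
    have e : (((volume : Measure (Rn n)).restrict A).prod (volume : Measure (Rn n))) =
        (volume : Measure (Rn n × Rn n)).restrict (A ×ˢ Set.univ) := by
      rw [Measure.volume_eq_prod, ← Measure.prod_restrict, Measure.restrict_univ]
    rw [e]; exact h1
  have h3 := h2.prod_right_ae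
  have hne : (ae ((volume : Measure (Rn n)).restrict A)).NeBot := by
    rw [ae_neBot, Ne, Measure.restrict_eq_zero]
    exact (measure_ball_pos volume x₀ (by positivity)).ne'
  obtain ⟨x, hx, hxA⟩ := (h3.and (ae_restrict_mem measurableSet_ball)).exists
  have hh : Integrable (fun y => auxh n p s R (y - x₀)) :=
    (auxh_integrable n hn p s R hp hs0 hs1 hR).comp_sub_right x₀
  have hdom := (hh.const_mul (1 + 2 ^ p * |u x| ^ p)).add (hx.const_mul (2 ^ p * 2 ^ ((n : ℝ) + p * s)))
  have hm : Measurable (auxG n p s R u x₀) := by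
    unfold auxG
    apply Measurable.indicator _ measurableSet_ball.compl
    unfold minusPart; fun_prop
  refine Integrable.mono' hdom hm.aestronglyMeasurable (ae_of_all _ fun y => ?_)
  rw [Real.norm_eq_abs, abs_of_nonneg (auxG_nonneg _ _ _ _ _ _ _)]
  have hg0 : 0 ≤ gagliardoIntegrand n p s u (x, y) := by unfold gagliardoIntegrand; positivity
  have hh0 := auxh_nonneg n p s R hR (y - x₀)
  simp only [Pi.add_apply]
  by_cases hy : y ∈ ball x₀ R
  · have : auxG n p s R u x₀ y = 0 := by simp [auxG, hy]
    rw [this]; positivity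
  · have e : auxG n p s R u x₀ y = |minusPart u y| ^ (p - 1) * ‖y - x₀‖ ^ (-(n : ℝ) - p * s) := by
      simp [auxG, hy]
    rw [e]
    rw [mem_ball_iff_norm, not_lt] at hy
    rw [hA, mem_ball_iff_norm] at hxA
    have hy0 : 0 < ‖y - x₀‖ := by linarith
    have eh : auxh n p s R (y - x₀) = ‖y - x₀‖ ^ (-(n : ℝ) - p * s) := by
      unfold auxh
      rw [min_eq_left, Real.one_rpow, one_mul]
      rw [div_mul_eq_mul_div, le_div_iff₀ hR]; linarith
    rw [eh]
    have a0 : |minusPart u y| ≤ |u y| := by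
      unfold minusPart
      rw [abs_of_nonneg (le_max_right _ _)]
      exact max_le (neg_le_abs _) (abs_nonneg _)
    have a1 : |minusPart u y| ^ (p - 1) ≤ 1 + |u y| ^ p := by
      refine (Real.rpow_le_rpow (abs_nonneg _) a0 (by linarith)).trans ?_
      have := aux_young p |u y| 1 hp (abs_nonneg _) zero_le_one
      rw [Real.one_rpow, mul_one] at this; linarith
    have a2 : |u y| ^ p ≤ 2 ^ p * (|u x| ^ p + |u x - u y| ^ p) := by
      refine le_trans (Real.rpow_le_rpow (abs_nonneg _) (?_ : |u y| ≤ |u x| + |u x - u y|) (by linarith))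
        (aux_add_rpow p _ _ (by linarith) (abs_nonneg _) (abs_nonneg _))
      have := abs_sub_abs_le_abs_sub (u y) (u x)
      rw [abs_sub_comm (u y)] at this; linarith
    have b1 : ‖x - y‖ ≤ 2 * ‖y - x₀‖ := by
      have : x - y = (x - x₀) - (y - x₀) := by abel
      rw [this]
      have := norm_sub_le (x - x₀) (y - x₀)
      linarith
    have b2 : 0 < ‖x - y‖ := by
      have : y - x₀ = (x - x₀) - (x - y) := by abel
      have h := norm_sub_le (x - x₀) (x - y)
      rw [← this] at h; linarith
    have b3 : ‖y - x₀‖ ^ (-(n : ℝ) - p * s) ≤ 2 ^ ((n : ℝ) + p * s) * ‖x - y‖ ^ (-(n : ℝ) - p * s) := by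
      have := Real.rpow_le_rpow_of_nonpos b2 b1 (show -(n : ℝ) - p * s ≤ 0 by
        have : (0:ℝ) ≤ n := Nat.cast_nonneg n
        linarith)
      rw [Real.mul_rpow (by norm_num) hy0.le] at this
      have e2 : (2:ℝ) ^ ((n : ℝ) + p * s) * 2 ^ (-(n : ℝ) - p * s) = 1 := by
        rw [← Real.rpow_add (by norm_num)]; ring_nf; simp
      calc ‖y - x₀‖ ^ (-(n : ℝ) - p * s) = 2 ^ ((n : ℝ) + p * s) *
            (2 ^ (-(n : ℝ) - p * s) * ‖y - x₀‖ ^ (-(n : ℝ) - p * s)) := by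
              rw [← mul_assoc, e2, one_mul]
        _ ≤ _ := by gcongr
    unfold gagliardoIntegrand
    dsimp only
    calc |minusPart u y| ^ (p - 1) * ‖y - x₀‖ ^ (-(n : ℝ) - p * s)
        ≤ (1 + 2 ^ p * (|u x| ^ p + |u x - u y| ^ p)) * ‖y - x₀‖ ^ (-(n : ℝ) - p * s) := by
          gcongr; linarith
      _ = (1 + 2 ^ p * |u x| ^ p) * ‖y - x₀‖ ^ (-(n : ℝ) - p * s) +
          2 ^ p * |u x - u y| ^ p * ‖y - x₀‖ ^ (-(n : ℝ) - p * s) := by ring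
      _ ≤ (1 + 2 ^ p * |u x| ^ p) * ‖y - x₀‖ ^ (-(n : ℝ) - p * s) +
          2 ^ p * |u x - u y| ^ p * (2 ^ ((n : ℝ) + p * s) * ‖x - y‖ ^ (-(n : ℝ) - p * s)) := by
          gcongr
      _ = _ := by ring

theorem auxG_tail (n : ℕ) (hn : 1 ≤ n) (p s R : ℝ) (hp : 1 < p) (hs0 : 0 < s)
    (hR : 0 < R) (u : Rn n → ℝ) (x₀ : Rn n) : 0 < sphereArea n ∧
    ∫ y, auxG n p s R u x₀ y =
      sphereArea n / (p * s) * R ^ (-(p * s)) * tail n p s (minusPart u) x₀ R ^ (p - 1) := by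
  have hsp : 0 < sphereArea n := by
    unfold sphereArea
    have h1 : 0 < (volume (Metric.ball (0 : Rn n) 1)).toReal :=
      ENNReal.toReal_pos (measure_ball_pos volume _ one_pos).ne' measure_ball_lt_top.ne
    have : (0:ℝ) < n := by exact_mod_cast hn
    positivity
  refine ⟨hsp, ?_⟩
  have hps : 0 < p * s := by positivity
  unfold auxG tail
  rw [integral_indicator measurableSet_ball.compl]
  set I := ∫ y in (ball x₀ R)ᶜ, |minusPart u y| ^ (p - 1) * ‖y - x₀‖ ^ (-(n : ℝ) - p * s) with hI
  have hI0 : 0 ≤ I := by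
    apply integral_nonneg; intro y; positivity
  rw [← Real.rpow_mul (by positivity), one_div, inv_mul_cancel₀ (by linarith), Real.rpow_one,
    Real.rpow_neg hR.le]
  have : R ^ (p * s) ≠ 0 := by positivity
  field_simp

theorem aux_pointwise (n : ℕ) (p s lam Lam b r R : ℝ) (hp : 1 < p) (hs0 : 0 < s) (hs1 : s < 1)
    (hlam : 0 < lam) (hlamLam : lam ≤ Lam) (hb : 0 < b) (hr : 0 < r) (hrR : r < R / 2)
    (K u : Rn n → ℝ) (hK : KernelClass n p s lam Lam K) (x₀ : Rn n)
    (hu : ∀ x ∈ ball x₀ R, 0 ≤ u x) (z : Rn n × Rn n) :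
    Hp p (u z.1 - u z.2) * (auxphi p b x₀ r u z.1 - auxphi p b x₀ r u z.2) * K (z.1 - z.2) +
      (p - 1) * (ball x₀ r ×ˢ ball x₀ r).indicator
        (fun z => |Real.log ((u z.1 + b) / (u z.2 + b))| ^ p * K (z.1 - z.2)) z ≤
      2 ^ (p - 1) * (cnps n p s * Lam) * auxD n p s r (ball x₀ (3 / 2 * r)) z +
      2 ^ (p - 1) * b ^ (1 - p) * (cnps n p s * Lam * 4 ^ ((n : ℝ) + p * s)) *
        ((ball x₀ (3 / 2 * r)).indicator (fun _ => (1:ℝ)) z.1 * auxG n p s R u x₀ z.2 +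
         auxG n p s R u x₀ z.1 * (ball x₀ (3 / 2 * r)).indicator (fun _ => (1:ℝ)) z.2) := by
  have hc := auxc_pos n p s hp hs1
  have hL : 0 < Lam := by linarith
  have hps : 0 < p * s := by positivity
  have hD := auxpsi_D n p s r hp hr x₀ z
  have hD0 : 0 ≤ auxD n p s r (ball x₀ (3 / 2 * r)) z := le_trans (by positivity) hD
  have hind : ∀ x, 0 ≤ (ball x₀ (3 / 2 * r)).indicator (fun _ => (1:ℝ)) x := fun x =>
    Set.indicator_nonneg (fun _ _ => zero_le_one) x
  have hG0 := auxG_nonneg n p s R u x₀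
  have hR0 : 0 ≤ 2 ^ (p - 1) * (cnps n p s * Lam) * auxD n p s r (ball x₀ (3 / 2 * r)) z +
      2 ^ (p - 1) * b ^ (1 - p) * (cnps n p s * Lam * 4 ^ ((n : ℝ) + p * s)) *
        ((ball x₀ (3 / 2 * r)).indicator (fun _ => (1:ℝ)) z.1 * auxG n p s R u x₀ z.2 +
         auxG n p s R u x₀ z.1 * (ball x₀ (3 / 2 * r)).indicator (fun _ => (1:ℝ)) z.2) := by
    have := hind z.1; have := hind z.2; have := hG0 z.1; have := hG0 z.2
    positivity
  by_cases hz : z.1 = z.2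
  · have hlog : (ball x₀ r ×ˢ ball x₀ r).indicator
        (fun z => |Real.log ((u z.1 + b) / (u z.2 + b))| ^ p * K (z.1 - z.2)) z = 0 := by
      apply Set.indicator_apply_eq_zero.mpr
      intro hm
      have : 0 ≤ u z.2 := hu _ (ball_subset_ball (by linarith) hm.2)
      rw [hz, div_self (by positivity), Real.log_one, abs_zero, Real.zero_rpow (by linarith), zero_mul]
    refine le_trans (le_of_eq ?_) hR0
    rw [hlog, hz]
    simp only [sub_self, mul_zero, zero_mul, add_zero]
  have hne : z.1 - z.2 ≠ 0 := sub_ne_zero.mpr hz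
  obtain ⟨k1, k2⟩ := hK.2.2 _ hne
  have k0 : 0 ≤ K (z.1 - z.2) := le_trans (by positivity) k1
  by_cases hm : z ∈ ball x₀ r ×ˢ ball x₀ r
  · refine le_trans ?_ hR0
    rw [Set.indicator_of_mem hm]
    have u1 : 0 ≤ u z.1 := hu _ (ball_subset_ball (by linarith) hm.1)
    have u2 : 0 ≤ u z.2 := hu _ (ball_subset_ball (by linarith) hm.2)
    have := aux_log p (u z.1 + b) (u z.2 + b) hp (by linarith) (by linarith)
    rw [add_sub_add_right_eq_sub] at this
    unfold auxphi
    rw [auxpsi_one x₀ r hr _ hm.1, auxpsi_one x₀ r hr _ hm.2, Real.one_rpow, one_mul, one_mul,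
      max_eq_left u1, max_eq_left u2]
    nlinarith
  rw [Set.indicator_of_notMem hm, mul_zero, add_zero]
  have hneg : ∀ x, u x < 0 → x ∉ ball x₀ R := fun x hx h => absurd (hu x h) (not_le.mpr hx)
  have hneg2 : ∀ x, u x < 0 → auxpsi x₀ r x = 0 := fun x hx =>
    auxpsi_zero x₀ r hr x fun h => hneg x hx (ball_subset_ball (by linarith) h)
  have sc := aux_scalar p (u z.1) (u z.2) b (auxpsi x₀ r z.1) (auxpsi x₀ r z.2) hp hb
    (auxpsi_nonneg _ _ _) (auxpsi_nonneg _ _ _) (hneg2 _) (hneg2 _)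
  -- far bound
  have far : ∀ x y : Rn n, (max (-u y) 0) ^ (p - 1) * auxpsi x₀ r x ^ p * ‖x - y‖ ^ (-(n : ℝ) - p * s) ≤
      4 ^ ((n : ℝ) + p * s) * ((ball x₀ (3 / 2 * r)).indicator (fun _ => (1:ℝ)) x * auxG n p s R u x₀ y) := by
    intro x y
    have hr0 : 0 ≤ 4 ^ ((n : ℝ) + p * s) * ((ball x₀ (3 / 2 * r)).indicator (fun _ => (1:ℝ)) x * auxG n p s R u x₀ y) := by
      have := hind x; have := hG0 y; positivity
    by_cases hx : x ∈ ball x₀ (3 / 2 * r)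
    swap
    · rw [auxpsi_zero x₀ r hr x hx, Real.zero_rpow (by linarith)]
      simpa using hr0
    by_cases hy : u y < 0
    swap
    · rw [max_eq_right (by linarith), Real.zero_rpow (by linarith)]
      simpa using hr0
    have hyR := hneg y hy
    have eG : auxG n p s R u x₀ y = (max (-u y) 0) ^ (p - 1) * ‖y - x₀‖ ^ (-(n : ℝ) - p * s) := by
      unfold auxG
      rw [Set.indicator_of_mem (show y ∈ (ball x₀ R)ᶜ from hyR)]
      unfold minusPart
      rw [abs_of_nonneg (le_max_right _ _)]
    rw [eG, Set.indicator_of_mem hx, one_mul]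
    rw [mem_ball_iff_norm] at hx hyR
    rw [not_lt] at hyR
    have hy0 : 0 < ‖y - x₀‖ := by linarith
    have d1 : 4⁻¹ * ‖y - x₀‖ ≤ ‖x - y‖ := by
      have : y - x₀ = (x - x₀) - (x - y) := by abel
      have h := norm_sub_le (x - x₀) (x - y)
      rw [← this] at h; linarith
    have d2 : ‖x - y‖ ^ (-(n : ℝ) - p * s) ≤ 4 ^ ((n : ℝ) + p * s) * ‖y - x₀‖ ^ (-(n : ℝ) - p * s) := by
      have := Real.rpow_le_rpow_of_nonpos (by positivity) d1 (show -(n : ℝ) - p * s ≤ 0 by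
        have : (0:ℝ) ≤ n := Nat.cast_nonneg n
        linarith)
      rw [Real.mul_rpow (by norm_num) hy0.le, Real.inv_rpow (by norm_num), ← Real.rpow_neg (by norm_num)] at this
      rwa [show -(-(n : ℝ) - p * s) = (n : ℝ) + p * s by ring] at this
    have d3 : auxpsi x₀ r x ^ p ≤ 1 :=
      Real.rpow_le_one (auxpsi_nonneg _ _ _) (auxpsi_le_one x₀ r x) (by linarith)
    have := auxpsi_nonneg x₀ r x
    calc _ ≤ (max (-u y) 0) ^ (p - 1) * 1 * (4 ^ ((n : ℝ) + p * s) * ‖y - x₀‖ ^ (-(n : ℝ) - p * s)) := by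
          gcongr
      _ = _ := by ring
  have f1 := far z.1 z.2
  have f2 := far z.2 z.1
  rw [norm_sub_rev] at f2
  set α := auxpsi x₀ r z.1
  set β := auxpsi x₀ r z.2
  have hα : 0 ≤ α := auxpsi_nonneg _ _ _
  have hβ : 0 ≤ β := auxpsi_nonneg _ _ _
  set κ := ‖z.1 - z.2‖ ^ (-(n : ℝ) - p * s)
  calc _ ≤ (2 ^ (p - 1) * |α - β| ^ p + 2 ^ (p - 1) * b ^ (1 - p) *
        ((max (-u z.2) 0) ^ (p - 1) * α ^ p + (max (-u z.1) 0) ^ (p - 1) * β ^ p)) * K (z.1 - z.2) :=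
        mul_le_mul_of_nonneg_right sc k0
    _ ≤ (2 ^ (p - 1) * |α - β| ^ p + 2 ^ (p - 1) * b ^ (1 - p) *
        ((max (-u z.2) 0) ^ (p - 1) * α ^ p + (max (-u z.1) 0) ^ (p - 1) * β ^ p)) *
          (cnps n p s * Lam * κ) :=
        mul_le_mul_of_nonneg_left k2 (by positivity)
    _ = 2 ^ (p - 1) * (cnps n p s * Lam) * (|α - β| ^ p * κ) + 2 ^ (p - 1) * b ^ (1 - p) * (cnps n p s * Lam) *
        ((max (-u z.2) 0) ^ (p - 1) * α ^ p * κ + (max (-u z.1) 0) ^ (p - 1) * β ^ p * κ) := by ring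
    _ ≤ 2 ^ (p - 1) * (cnps n p s * Lam) * auxD n p s r (ball x₀ (3 / 2 * r)) z +
        2 ^ (p - 1) * b ^ (1 - p) * (cnps n p s * Lam) *
        (4 ^ ((n : ℝ) + p * s) * ((ball x₀ (3 / 2 * r)).indicator (fun _ => (1:ℝ)) z.1 * auxG n p s R u x₀ z.2)
        + 4 ^ ((n : ℝ) + p * s) * ((ball x₀ (3 / 2 * r)).indicator (fun _ => (1:ℝ)) z.2 * auxG n p s R u x₀ z.1)) := by
        apply add_le_add
        · exact mul_le_mul_of_nonneg_left hD (by positivity)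
        · exact mul_le_mul_of_nonneg_left (add_le_add f1 f2) (by positivity)
    _ = _ := by ring

theorem auxV_term (n : ℕ) (p s q b r R : ℝ) (hp : 1 < p) (hq : 1 < q) (hb : 0 < b)
    (hr : 0 < r) (hrR : r < R / 2) (V u : Rn n → ℝ) (hV : IsPotential n p s q V) (x₀ : Rn n)
    (Ω : Set (Rn n)) (hΩ : Bornology.IsBounded Ω) (hB : ball x₀ R ⊆ Ω)
    (hu : ∀ x ∈ ball x₀ R, 0 ≤ u x) :
    ∫ x, V x * (|u x| ^ (p - 2) * u x) * auxphi p b x₀ r u x ≤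
      lqNormOn n q Ω (plusPart V) * (volume.real (ball x₀ (3 / 2 * r))) ^ (1 - 1 / q) := by
  obtain ⟨i1, i2, i3⟩ := auxV_int n p s q hq V hV Ω hΩ
  set B := ball x₀ (3 / 2 * r) with hBdef
  have hBR : B ⊆ ball x₀ R := ball_subset_ball (by linarith)
  have hBΩ : B ⊆ Ω := hBR.trans hB
  have hVm := hV.measurable
  have hpm : Measurable (plusPart V) := by unfold plusPart; fun_prop
  have hp0 : ∀ x, 0 ≤ plusPart V x := fun x => le_max_right _ _
  have s1 : ∫ x, V x * (|u x| ^ (p - 2) * u x) * auxphi p b x₀ r u x ≤ ∫ x in B, plusPart V x := by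
    have hn0 : 0 ≤ ∫ x in B, plusPart V x := integral_nonneg hp0
    by_cases hint : Integrable (fun x => V x * (|u x| ^ (p - 2) * u x) * auxphi p b x₀ r u x)
    swap
    · rw [integral_undef hint]; exact hn0
    rw [← integral_indicator measurableSet_ball]
    refine integral_mono hint ((integrable_indicator_iff measurableSet_ball).mpr (i1.mono_set hBΩ)) fun x => ?_
    dsimp only
    by_cases hx : x ∈ B
    · rw [Set.indicator_of_mem hx]
      have ux := hu x (hBR hx)
      have e := aux_hp_nonneg p (u x) hp ux
      unfold Hp at e
      rw [e]
      unfold auxphi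
      rw [max_eq_left ux]
      have hub : 0 < u x + b := by linarith
      have g1 : auxpsi x₀ r x ^ p ≤ 1 :=
        Real.rpow_le_one (auxpsi_nonneg _ _ _) (auxpsi_le_one x₀ r x) (by linarith)
      have g0 : 0 ≤ auxpsi x₀ r x ^ p := Real.rpow_nonneg (auxpsi_nonneg _ _ _) _
      have g2 : (u x) ^ (p - 1) * (u x + b) ^ (1 - p) ≤ 1 := by
        have : (u x + b) ^ (p - 1) * (u x + b) ^ (1 - p) = 1 := by rw [← Real.rpow_add hub]; simp
        have h4 : u x ^ (p - 1) ≤ (u x + b) ^ (p - 1) := Real.rpow_le_rpow ux (by linarith) (by linarith)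
        calc _ ≤ (u x + b) ^ (p - 1) * (u x + b) ^ (1 - p) := mul_le_mul_of_nonneg_right h4 (by positivity)
          _ = 1 := this
      have g3 : 0 ≤ (u x) ^ (p - 1) * (u x + b) ^ (1 - p) := by positivity
      have g4 : auxpsi x₀ r x ^ p * ((u x) ^ (p - 1) * (u x + b) ^ (1 - p)) ≤ 1 := mul_le_one₀ g1 g3 g2
      have hvp : V x ≤ plusPart V x := le_max_left _ _
      calc _ = V x * (auxpsi x₀ r x ^ p * ((u x) ^ (p - 1) * (u x + b) ^ (1 - p))) := by ring
        _ ≤ plusPart V x * (auxpsi x₀ r x ^ p * ((u x) ^ (p - 1) * (u x + b) ^ (1 - p))) :=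
          mul_le_mul_of_nonneg_right hvp (mul_nonneg g0 g3)
        _ ≤ plusPart V x * 1 := mul_le_mul_of_nonneg_left g4 (hp0 x)
        _ = _ := mul_one _
    · rw [Set.indicator_of_notMem hx, auxphi_zero p b hp x₀ r hr u x hx, mul_zero]
  refine s1.trans ?_
  have hconj : q.HolderConjugate (Real.conjExponent q) := Real.HolderConjugate.conjExponent hq
  have hBfin : volume B ≠ ⊤ := measure_ball_lt_top.ne
  have : IsFiniteMeasure (volume.restrict B) := ⟨by
    rw [Measure.restrict_apply_univ]; exact hBfin.lt_top⟩
  have hL : MemLp (plusPart V) (ENNReal.ofReal q) (volume.restrict B) := by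
    have hq0 : ENNReal.ofReal q ≠ 0 := by
      rw [Ne, ENNReal.ofReal_eq_zero, not_le]; linarith
    rw [← integrable_norm_rpow_iff hpm.aestronglyMeasurable hq0 ENNReal.ofReal_ne_top,
      ENNReal.toReal_ofReal (by linarith)]
    refine (i3.mono_set hBΩ).congr (ae_of_all _ fun x => ?_)
    simp only [Real.norm_eq_abs, abs_of_nonneg (hp0 x)]
  have ho := integral_mul_le_Lp_mul_Lq_of_nonneg (μ := volume.restrict B) hconj
    (f := plusPart V) (g := fun _ => (1:ℝ)) (ae_of_all _ hp0) (ae_of_all _ fun _ => zero_le_one) hL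
    (memLp_const 1)
  simp only [mul_one, Real.one_rpow, integral_const, smul_eq_mul, measureReal_restrict_apply_univ] at ho
  refine ho.trans ?_
  have e2 : 1 / Real.conjExponent q = 1 - 1 / q := by
    have := hconj.inv_add_inv_eq_one
    rw [one_div, one_div]; linarith
  rw [e2]
  apply mul_le_mul_of_nonneg_right _ (by positivity)
  unfold lqNormOn
  apply Real.rpow_le_rpow (integral_nonneg fun x => Real.rpow_nonneg (hp0 x) _) _ (by positivity)
  have e3 : ∀ x, |plusPart V x| ^ q = plusPart V x ^ q := fun x => by rw [abs_of_nonneg (hp0 x)]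
  simp only [e3]
  exact setIntegral_mono_set i3 (ae_of_all _ fun x => Real.rpow_nonneg (hp0 x) _)
    (Filter.Eventually.of_forall hBΩ)

theorem aux_final (C1 C2 C3 m J ρ Q N P X : ℝ) (hm : 0 < m) (h1 : 0 ≤ C1) (h2 : 0 ≤ C2) (h3 : 0 ≤ C3)
    (hρ : 0 ≤ ρ) (hQ : 0 ≤ Q) (hN : 0 ≤ N) (ha : P + m * J ≤ C1 * ρ + C2 * ρ * Q) (hb : 0 ≤ P + X)
    (hc : X ≤ N * (C3 * ρ)) : J ≤ ((C1 + C2 + C3) / m + 1) * ρ * (Q + (1 + N)) := by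
  have z1 : 0 ≤ C1 * ρ * Q := by positivity
  have z2 : 0 ≤ C1 * ρ * N := by positivity
  have z3 : 0 ≤ C2 * ρ * N := by positivity
  have z4 : 0 ≤ C2 * ρ := by positivity
  have z5 : 0 ≤ C3 * ρ * Q := by positivity
  have z6 : 0 ≤ C3 * ρ := by positivity
  have fin : J * m ≤ (C1 + C2 + C3) * ρ * (Q + (1 + N)) := by
    have e : (C1 + C2 + C3) * ρ * (Q + (1 + N)) = C1 * ρ + C2 * ρ * Q + N * (C3 * ρ) +
      (C1 * ρ * Q + C1 * ρ * N + C2 * ρ * N + C2 * ρ + C3 * ρ * Q + C3 * ρ) := by ring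
    rw [e]; linarith
  rw [← le_div_iff₀ hm] at fin
  have z7 : 0 ≤ ρ * (Q + (1 + N)) := by positivity
  have e2 : ((C1 + C2 + C3) / m + 1) * ρ * (Q + (1 + N)) =
      (C1 + C2 + C3) * ρ * (Q + (1 + N)) / m + ρ * (Q + (1 + N)) := by ring
  rw [e2]; linarith

set_option maxHeartbeats 2000000 in
/-- logarithmic estimate for weak supersolutions (Theorem 1.2). -/
theorem logarithmic_estimate
    (n : ℕ) (hn : 1 ≤ n) (p s lam Lam : ℝ)
    (hp : 1 < p) (hs0 : 0 < s) (hs1 : s < 1)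
    (hlam : 0 < lam) (hlamLam : lam ≤ Lam)
    (Ω : Set (Rn n)) (hΩopen : IsOpen Ω) (hΩconn : IsConnected Ω)
    (hΩbdd : Bornology.IsBounded Ω) :
    ∃ c₀ : ℝ, 0 < c₀ ∧
      ∀ q : ℝ, (n : ℝ) / (p * s) < q → 1 < (n : ℝ) / (p * s) →
      ∀ V : Rn n → ℝ, IsPotential n p s q V →
      ∀ g : Rn n → ℝ, MemWsp n p s Set.univ g →
      ∀ K : Rn n → ℝ, KernelClass n p s lam Lam K →
      ∀ u : Rn n → ℝ, WeakSupersolution n p s Ω K V g u →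
      ∀ (x₀ : Rn n) (R : ℝ), 0 < R → Metric.ball x₀ R ⊆ Ω →
        (∀ x ∈ Metric.ball x₀ R, 0 ≤ u x) →
      ∀ b : ℝ, 0 < b → b < 1 → ∀ r : ℝ, 0 < r → r < R / 2 →
        (∫ z in (Metric.ball x₀ r) ×ˢ (Metric.ball x₀ r),
            |Real.log ((u z.1 + b) / (u z.2 + b))| ^ p * K (z.1 - z.2)) ≤
          c₀ * r ^ ((n : ℝ) - p * s) *
            (1 / b ^ (p - 1) * (r / R) ^ (p * s) * tail n p s (minusPart u) x₀ R ^ (p - 1) +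
              (1 + lqNormOn n q Ω (plusPart V))) := by
  have hc := auxc_pos n p s hp hs1
  have hL : 0 < Lam := by linarith
  have hps : 0 < p * s := by positivity
  have hm0 : 0 < p - 1 := by linarith
  have : Nontrivial (Rn n) := by
    have : Nonempty (Fin n) := ⟨⟨0, by omega⟩⟩
    infer_instance
  set ω := volume.real (ball (0 : Rn n) 1) with hω
  have hω0 : 0 ≤ ω := measureReal_nonneg
  set W := (3 / 2 : ℝ) ^ n * ω with hW
  have hW0 : 0 ≤ W := by positivity
  set I := ∫ z, auxh n p s 1 z with hI
  have hI0 : 0 ≤ I := integral_nonneg fun z => auxh_nonneg n p s 1 one_pos z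
  set M := 1 + diam Ω with hM
  have hM1 : 1 ≤ M := by linarith [diam_nonneg (s := Ω)]
  have hS : 0 ≤ sphereArea n := by unfold sphereArea; positivity
  set C1 := 2 ^ (p - 1) * (cnps n p s * Lam) * (2 * (W * I)) with hC1
  set C2 := 2 ^ (p - 1) * (cnps n p s * Lam * 4 ^ ((n : ℝ) + p * s)) *
    (2 * (W * (sphereArea n / (p * s)))) with hC2
  set C3 := max 1 W * M ^ (p * s) with hC3
  have hC1n : 0 ≤ C1 := by positivity
  have hC2n : 0 ≤ C2 := by positivity
  have hC3n : 0 ≤ C3 := by positivity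
  refine ⟨(C1 + C2 + C3) / (p - 1) + 1, by positivity, ?_⟩
  intro q hq hq1 V hV g _ K hK u hsup x₀ R hR hBΩ hu b hb hb1 r hr hrR
  have hqq : 1 < q := hq1.trans hq
  set T := tail n p s (minusPart u) x₀ R ^ (p - 1) with hT
  have hT0 : 0 ≤ T := by
    apply Real.rpow_nonneg
    unfold tail
    apply Real.rpow_nonneg
    have : 0 ≤ ∫ y in (Metric.ball x₀ R)ᶜ, |minusPart u y| ^ (p - 1) * ‖y - x₀‖ ^ (-(n : ℝ) - p * s) :=
      integral_nonneg fun y => by positivity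
    positivity
  set N := lqNormOn n q Ω (plusPart V) with hN
  have hN0 : 0 ≤ N := by
    apply Real.rpow_nonneg
    exact integral_nonneg fun y => by positivity
  set Q := 1 / b ^ (p - 1) * (r / R) ^ (p * s) * T with hQ
  have hQ0 : 0 ≤ Q := by positivity
  have hrn : 0 < r ^ ((n : ℝ) - p * s) := by positivity
  have hRHS : 0 ≤ ((C1 + C2 + C3) / (p - 1) + 1) * r ^ ((n : ℝ) - p * s) * (Q + (1 + N)) := by
    positivity
  set S := ball x₀ r ×ˢ ball x₀ r with hSdef
  have hSm : MeasurableSet S := measurableSet_ball.prod measurableSet_ball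
  set lg : Rn n × Rn n → ℝ :=
    fun z => |Real.log ((u z.1 + b) / (u z.2 + b))| ^ p * K (z.1 - z.2) with hlg
  by_cases hint : IntegrableOn lg S
  swap
  · rw [integral_undef hint]; exact hRHS
  have hint' : Integrable (S.indicator lg) := (integrable_indicator_iff hSm).mpr hint
  have hX : MemX n p s Ω u := hsup.1.1.1
  set B := ball x₀ (3 / 2 * r) with hBdef
  have hBR : B ⊆ ball x₀ R := ball_subset_ball (by linarith)
  have hφX := auxphi_memX0 n hn p s b r hp hs0 hs1 hb hr x₀ u Ω hΩbdd (hBR.trans hBΩ) hX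
  have hφV := auxphi_memLpV n p s q b r hp hqq hb x₀ u V hX.1 hV Ω hΩbdd
  have hweak := hsup.2 (auxphi p b x₀ r u) ⟨hφX, hφV⟩ (auxphi_nonneg p b hb x₀ r u)
  have hVt := auxV_term n p s q b r R hp hqq hb hr hrR V u hV x₀ Ω hΩbdd hBΩ hu
  have hF := auxF_int n p s lam Lam hp hs1 hlam hlamLam Ω K u (auxphi p b x₀ r u) hK hX hφX.1
    (fun x hx => auxphi_zero p b hp x₀ r hr u x fun h => hx (hBΩ (hBR h)))
  obtain ⟨hDi, hDe⟩ := auxD_facts n hn p s r hp hs0 hs1 hr B measurableSet_ball measure_ball_lt_top.ne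
  have hGi := auxG_int n hn p s R hp hs0 hs1 hR u x₀ Ω hX hBΩ
  obtain ⟨hsp, hGe⟩ := auxG_tail n hn p s R hp hs0 hR u x₀
  have hBi : Integrable (B.indicator (fun _ => (1:ℝ))) :=
    (integrable_indicator_iff measurableSet_ball).mpr (integrableOn_const measure_ball_lt_top.ne)
  have hBe : ∫ x, B.indicator (fun _ => (1:ℝ)) x = volume.real B := by
    rw [integral_indicator measurableSet_ball]
    simp only [integral_const, smul_eq_mul, mul_one, measureReal_restrict_apply_univ]
    rfl
  have hvB : volume.real B = W * r ^ n := by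
    have := Measure.addHaar_ball (volume : Measure (Rn n)) x₀ (r := 3 / 2 * r) (by positivity)
    rw [measureReal_def, hBdef, this, ENNReal.toReal_mul, ENNReal.toReal_ofReal (by positivity)]
    have hdim : Module.finrank ℝ (Rn n) = n := by simp
    rw [hdim, mul_pow, hW, hω, measureReal_def]; ring
  have p1 : Integrable (fun z : Rn n × Rn n => B.indicator (fun _ => (1:ℝ)) z.1 * auxG n p s R u x₀ z.2) :=
    hBi.mul_prod hGi
  have p2 : Integrable (fun z : Rn n × Rn n => auxG n p s R u x₀ z.1 * B.indicator (fun _ => (1:ℝ)) z.2) :=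
    hGi.mul_prod hBi
  have e1 : ∫ z : Rn n × Rn n, B.indicator (fun _ => (1:ℝ)) z.1 * auxG n p s R u x₀ z.2 =
      volume.real B * ∫ y, auxG n p s R u x₀ y := by
    rw [← hBe]
    exact integral_prod_mul (μ := (volume : Measure (Rn n))) (ν := (volume : Measure (Rn n))) _ _
  have e2 : ∫ z : Rn n × Rn n, auxG n p s R u x₀ z.1 * B.indicator (fun _ => (1:ℝ)) z.2 =
      (∫ y, auxG n p s R u x₀ y) * volume.real B := by
    rw [← hBe]
    exact integral_prod_mul (μ := (volume : Measure (Rn n))) (ν := (volume : Measure (Rn n))) _ _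
  have hmono := integral_mono (hF.add (hint'.const_mul (p - 1)))
    ((hDi.const_mul (2 ^ (p - 1) * (cnps n p s * Lam))).add ((p1.add p2).const_mul
      (2 ^ (p - 1) * b ^ (1 - p) * (cnps n p s * Lam * 4 ^ ((n : ℝ) + p * s)))))
    (fun z => aux_pointwise n p s lam Lam b r R hp hs0 hs1 hlam hlamLam hb hr hrR K u hK x₀ hu z)
  rw [integral_add' hF (hint'.const_mul (p - 1)), integral_const_mul, integral_indicator hSm,
    integral_add' (hDi.const_mul _) ((p1.add p2).const_mul _), integral_const_mul, integral_const_mul,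
    integral_add' p1 p2, e1, e2, hDe, hGe, hvB] at hmono
  have hpair : pairing n p K u (auxphi p b x₀ r u) = ∫ z : Rn n × Rn n,
    Hp p (u z.1 - u z.2) * (auxphi p b x₀ r u z.1 - auxphi p b x₀ r u z.2) * K (z.1 - z.2) := rfl
  rw [← hpair] at hmono
  -- powers
  have w1 : r ^ n * r ^ (-(p * s)) = r ^ ((n : ℝ) - p * s) := by
    rw [← Real.rpow_natCast, ← Real.rpow_add hr]; ring_nf
  have w2 : b ^ (1 - p) = 1 / b ^ (p - 1) := by
    rw [one_div, ← Real.rpow_neg hb.le]; ring_nf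
  have w3 : r ^ n * R ^ (-(p * s)) = r ^ ((n : ℝ) - p * s) * (r / R) ^ (p * s) := by
    rw [← w1, Real.div_rpow hr.le hR.le, Real.rpow_neg hR.le, Real.rpow_neg hr.le]
    have : r ^ (p * s) ≠ 0 := by positivity
    field_simp
  have hrM : r ≤ M := by
    obtain ⟨v, hv⟩ := exists_norm_eq (Rn n) hr.le
    have m1 : x₀ + v ∈ Ω := hBΩ (by rw [mem_ball_iff_norm, add_sub_cancel_left, hv]; linarith)
    have m2 : x₀ ∈ Ω := hBΩ (mem_ball_self hR)
    have := dist_le_diam_of_mem hΩbdd m1 m2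
    rw [dist_eq_norm, add_sub_cancel_left, hv] at this
    linarith
  have hnq : (n : ℝ) / q ≤ p * s := by
    rw [div_lt_iff₀ hps] at hq
    rw [div_le_iff₀ (by linarith)]; linarith
  have hq0 : 0 < q := by linarith
  have h1q : 0 ≤ 1 - 1 / q := by
    rw [sub_nonneg, div_le_one hq0]; linarith
  have hVb : (W * r ^ n) ^ (1 - 1 / q) ≤ C3 * r ^ ((n : ℝ) - p * s) := by
    rw [Real.mul_rpow hW0 (by positivity)]
    have v1 : W ^ (1 - 1 / q) ≤ max 1 W := by
      calc W ^ (1 - 1 / q) ≤ (max 1 W) ^ (1 - 1 / q) := Real.rpow_le_rpow hW0 (le_max_right _ _) h1q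
        _ ≤ (max 1 W) ^ (1 : ℝ) := Real.rpow_le_rpow_of_exponent_le (le_max_left _ _) (by
            have : 0 < 1 / q := by positivity
            linarith)
        _ = _ := Real.rpow_one _
    have v2 : (r ^ n) ^ (1 - 1 / q) = r ^ (p * s - n / q) * r ^ ((n : ℝ) - p * s) := by
      rw [← Real.rpow_natCast, ← Real.rpow_mul hr.le, ← Real.rpow_add hr]; ring_nf
    have v3 : r ^ (p * s - n / q) ≤ M ^ (p * s) := by
      calc r ^ (p * s - n / q) ≤ M ^ (p * s - n / q) := Real.rpow_le_rpow hr.le hrM (by linarith)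
        _ ≤ _ := Real.rpow_le_rpow_of_exponent_le hM1 (by
            have : 0 ≤ (n : ℝ) / q := by positivity
            linarith)
    rw [v2, hC3]
    calc _ ≤ max 1 W * (M ^ (p * s) * r ^ ((n : ℝ) - p * s)) := by gcongr
      _ = _ := by ring
  rw [hvB] at hVt
  have hVt2 := hVt.trans (mul_le_mul_of_nonneg_left hVb hN0)
  set J := ∫ z in S, lg z with hJ
  have q1 : 2 ^ (p - 1) * (cnps n p s * Lam) * (2 * (W * r ^ n * (r ^ (-(p * s)) * I))) =
      C1 * r ^ ((n : ℝ) - p * s) := by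
    rw [hC1, ← w1]; ring
  have q2 : 2 ^ (p - 1) * b ^ (1 - p) * (cnps n p s * Lam * 4 ^ ((n : ℝ) + p * s)) *
      (W * r ^ n * (sphereArea n / (p * s) * R ^ (-(p * s)) * T) +
        sphereArea n / (p * s) * R ^ (-(p * s)) * T * (W * r ^ n)) =
      C2 * r ^ ((n : ℝ) - p * s) * Q := by
    rw [hC2, hQ, w2]
    linear_combination (2 ^ (p - 1) * (1 / b ^ (p - 1)) * (cnps n p s * Lam * 4 ^ ((n : ℝ) + p * s)) *
      (2 * (W * (sphereArea n / (p * s)))) * T) * w3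
  rw [q1, q2] at hmono
  set ρ := r ^ ((n : ℝ) - p * s) with hρ
  exact aux_final C1 C2 C3 (p - 1) J ρ Q N _ _ hm0 hC1n hC2n hC3n hrn.le hQ0 hN0 hmono hweak hVt2
end
end

section
/- Let p > 1 and set c_p = (p−1)^{p−1}/2. Then for all α, β ∈ ℝ and all A, B ≥ 0: |β−α|^{p−2}·(β−α)·(β·B^p − α·A^p) ≥ −c_p·(|α|+|β|)^p·|B−A|^p (where the expression |β−α|^{p−2}(β−α) is interpreted as 0 when α = β). -/
theorem aux_lam (s x : ℝ) (hs : 0 < s) (hx : 0 < x) (hx1 : x < 1) :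
    ∃ l : ℝ, 0 < l ∧ l < 1 ∧ x ≤ l ^ s ∧
      x * (1 - x) ^ s ≤ (1 - l) ^ s * (s ^ s / 2 * (1 + x) ^ (s + 1)) := by
  rcases le_or_gt 1 s with h | h
  · have h1 : (1 - x) / s ≤ 1 - x := div_le_self (by linarith) h
    have h2 : 0 < (1 - x) / s := div_pos (by linarith) hs
    refine ⟨1 - (1 - x) / s, by linarith, by linarith, ?_, ?_⟩
    · have := one_add_mul_self_le_rpow_one_add (s := -((1 - x) / s)) (by linarith) h
      have e : s * -((1 - x) / s) = x - 1 := by field_simp; ring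
      rw [e] at this
      calc x = 1 + (x - 1) := by ring
        _ ≤ _ := this
        _ = _ := by ring_nf
    · have e : (1 - (1 - (1 - x) / s)) ^ s * s ^ s = (1 - x) ^ s := by
        rw [← Real.mul_rpow (by linarith) hs.le]
        congr 1; field_simp; ring
      have h3 : 1 + x ≤ (1 + x) ^ (s + 1) :=
        Real.self_le_rpow_of_one_le (by linarith) (by linarith)
      have h4 : 0 ≤ (1 - x) ^ s := Real.rpow_nonneg (by linarith) _
      calc x * (1 - x) ^ s ≤ ((1 + x) ^ (s + 1) / 2) * (1 - x) ^ s :=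
            mul_le_mul_of_nonneg_right (by linarith) h4
        _ = _ := by rw [← e]; ring
  · have hd : 0 < s * x + (1 - x) := by nlinarith [mul_pos hs hx]
    have hsx := mul_pos hs hx
    refine ⟨s * x / (s * x + (1 - x)), by positivity, ?_, ?_, ?_⟩
    · rw [div_lt_one hd]; linarith
    · have h0 : 0 ≤ (1 - x) / (s * x) := div_nonneg (by linarith) hsx.le
      have := rpow_one_add_le_one_add_mul_self (s := (1 - x) / (s * x)) (by linarith) hs.le h.le
      have e : 1 + s * ((1 - x) / (s * x)) = x⁻¹ := by field_simp; ring
      have e2 : 1 + (1 - x) / (s * x) = (s * x / (s * x + (1 - x)))⁻¹ := by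
        field_simp
      rw [e, e2, Real.inv_rpow (by positivity)] at this
      exact (inv_le_inv₀ (by positivity) hx).1 this
    · set W := (s * x + (1 - x)) / s with hW
      have hWp : 0 < W := by positivity
      have h1l : 1 - s * x / (s * x + (1 - x)) = (1 - x) / (s * x + (1 - x)) := by
        field_simp; ring
      have hq : 0 ≤ (1 - x) / (s * x + (1 - x)) := div_nonneg (by linarith) hd.le
      rw [h1l]
      have e : (1 - x) ^ s = ((1 - x) / (s * x + (1 - x))) ^ s * s ^ s * W ^ s := by
        rw [← Real.mul_rpow hq hs.le, ← Real.mul_rpow (by positivity) hWp.le]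
        have g : ∀ D : ℝ, D ≠ 0 → 1 - x = (1 - x) / D * s * (D / s) := by
          intro D hD
          field_simp
        congr 1
        exact g _ hd.ne'
      have hx1p : (0:ℝ) < 1 + x := by linarith
      have b := rpow_one_add_le_one_add_mul_self (s := W / (1 + x) - 1)
        (by have : 0 < W / (1 + x) := by positivity
            linarith) hs.le h.le
      have e3 : 1 + s * (W / (1 + x) - 1) = (2 - s) / (1 + x) := by
        rw [hW]; field_simp; ring
      rw [e3, add_sub_cancel, Real.div_rpow hWp.le hx1p.le, div_le_div_iff₀ (by positivity) hx1p] at b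
      have hP : 0 < (1 + x) ^ s := by positivity
      have key : x * W ^ s ≤ (1 + x) ^ (s + 1) / 2 := by
        rw [Real.rpow_add_one hx1p.ne']
        have k1 : x * W ^ s * (1 + x) ≤ (1 + x) ^ s * (1 + x) / 2 * (1 + x) := by
          have k2 : x * (2 - s) ≤ (1 + x) * (1 + x) / 2 := by nlinarith [sq_nonneg (1 - x)]
          calc x * W ^ s * (1 + x) = x * (W ^ s * (1 + x)) := by ring
            _ ≤ x * ((2 - s) * (1 + x) ^ s) := mul_le_mul_of_nonneg_left b hx.le
            _ = x * (2 - s) * (1 + x) ^ s := by ring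
            _ ≤ (1 + x) * (1 + x) / 2 * (1 + x) ^ s := mul_le_mul_of_nonneg_right k2 hP.le
            _ = _ := by ring
        exact le_of_mul_le_mul_right k1 hx1p
      have hC : 0 ≤ ((1 - x) / (s * x + (1 - x))) ^ s * s ^ s := by positivity
      rw [e]
      calc _ = ((1 - x) / (s * x + (1 - x))) ^ s * s ^ s * (x * W ^ s) := by ring
        _ ≤ _ := mul_le_mul_of_nonneg_left key hC
        _ = _ := by ring

theorem aux_core (s x A B : ℝ) (hs : 0 < s) (hx : 0 ≤ x) (hx1 : x < 1) (hA : 0 ≤ A) (hB : 0 ≤ B) :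
    (1 - x) ^ s * (x * A ^ (s + 1) - B ^ (s + 1)) ≤
      s ^ s / 2 * (1 + x) ^ (s + 1) * |B - A| ^ (s + 1) := by
  have hR : 0 ≤ s ^ s / 2 * (1 + x) ^ (s + 1) * |B - A| ^ (s + 1) := by positivity
  have h1x : 0 < (1 - x) ^ s := Real.rpow_pos_of_pos (by linarith) _
  have hBp : 0 ≤ B ^ (s + 1) := by positivity
  have hAp : 0 ≤ A ^ (s + 1) := by positivity
  rcases hx.eq_or_lt with h0 | h0
  · refine le_trans (mul_nonpos_of_nonneg_of_nonpos h1x.le ?_) hR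
    rw [← h0]; linarith
  rcases le_or_gt A B with hAB | hAB
  · refine le_trans (mul_nonpos_of_nonneg_of_nonpos h1x.le ?_) hR
    have : A ^ (s + 1) ≤ B ^ (s + 1) := Real.rpow_le_rpow hA hAB (by linarith)
    nlinarith
  obtain ⟨l, l0, l1, hl, hk⟩ := aux_lam s x hs h0 hx1
  have ht : |B - A| = A - B := by rw [abs_of_neg (by linarith)]; ring
  rw [ht]
  have m0 : 0 < 1 - l := by linarith
  have t0 : 0 < A - B := by linarith
  generalize hm : 1 - l = m at *
  generalize htt : A - B = t at *
  have cv := (convexOn_rpow (p := s + 1) (by linarith)).2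
    (x := B / l) (y := t / m) (by simp; positivity) (by simp; positivity) l0.le m0.le (by linarith)
  simp only [smul_eq_mul] at cv
  have eA : l * (B / l) + m * (t / m) = A := by field_simp; linarith
  rw [eA, Real.div_rpow hB l0.le, Real.div_rpow t0.le m0.le, Real.rpow_add_one l0.ne' s,
    Real.rpow_add_one m0.ne' s] at cv
  have hls : 0 < l ^ s := by positivity
  have hms : 0 < m ^ s := by positivity
  have cv2 : A ^ (s + 1) ≤ B ^ (s + 1) / l ^ s + t ^ (s + 1) / m ^ s := by
    refine cv.trans_eq ?_
    field_simp
  have htp : 0 < t ^ (s + 1) := by positivity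
  have c3 : x * A ^ (s + 1) - B ^ (s + 1) ≤ x * (t ^ (s + 1) / m ^ s) := by
    have : x * (B ^ (s + 1) / l ^ s) ≤ B ^ (s + 1) := by
      rw [← mul_div_assoc, div_le_iff₀ hls]; nlinarith
    nlinarith
  calc _ ≤ (1 - x) ^ s * (x * (t ^ (s + 1) / m ^ s)) := mul_le_mul_of_nonneg_left c3 h1x.le
    _ = (x * (1 - x) ^ s) * (t ^ (s + 1) / m ^ s) := by ring
    _ ≤ _ := mul_le_mul_of_nonneg_right hk (by positivity)
    _ = _ := by field_simp

theorem aux_pos (p : ℝ) (hp : 1 < p) (a b A B : ℝ) (ha : 0 ≤ a) (hab : a < b)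
    (hA : 0 ≤ A) (hB : 0 ≤ B) :
    (b - a) ^ (p - 1) * (a * A ^ p - b * B ^ p) ≤
      (p - 1) ^ (p - 1) / 2 * (a + b) ^ p * |B - A| ^ p := by
  have hb : 0 < b := by linarith
  have h := aux_core (p - 1) (a / b) A B (by linarith) (by positivity)
    ((div_lt_one hb).2 hab) hA hB
  rw [sub_add_cancel] at h
  have e1 : b - a = b * (1 - a / b) := by field_simp
  have e2 : a + b = b * (1 + a / b) := by field_simp; ring
  have h1 : 0 ≤ 1 - a / b := by rw [sub_nonneg, div_le_one hb]; exact hab.le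
  have e3 : b ^ p = b ^ (p - 1) * b := by
    rw [← Real.rpow_add_one hb.ne', sub_add_cancel]
  have e4 : a * A ^ p - b * B ^ p = b * (a / b * A ^ p - B ^ p) := by field_simp
  rw [e4, e1, e2, Real.mul_rpow hb.le h1, Real.mul_rpow hb.le (by positivity)]
  have hbp : 0 ≤ b ^ p := by positivity
  have := mul_le_mul_of_nonneg_left h hbp
  calc _ = b ^ p * ((1 - a / b) ^ (p - 1) * (a / b * A ^ p - B ^ p)) := by rw [e3]; ring
    _ ≤ _ := this
    _ = _ := by ring

theorem aux_lt (p : ℝ) (hp : 1 < p) (α β A B : ℝ) (h : α < β)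
    (hA : 0 ≤ A) (hB : 0 ≤ B) :
    -((p - 1) ^ (p - 1) / 2) * (|α| + |β|) ^ p * |B - A| ^ p ≤
      |β - α| ^ (p - 2) * (β - α) * (β * B ^ p - α * A ^ p) := by
  have hd : 0 < β - α := by linarith
  have e : |β - α| ^ (p - 2) * (β - α) = (β - α) ^ (p - 1) := by
    rw [abs_of_pos hd, ← Real.rpow_add_one hd.ne']; congr 1; ring
  rw [e]
  rcases le_or_gt 0 α with h0 | h0
  · have := aux_pos p hp α β A B h0 h hA hB
    rw [abs_of_nonneg h0, abs_of_pos (by linarith : 0 < β)]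
    linarith
  rcases le_or_gt β 0 with h1 | h1
  · have := aux_pos p hp (-β) (-α) B A (by linarith) (by linarith) hB hA
    rw [abs_of_neg h0, abs_of_nonpos h1]
    rw [abs_sub_comm A B, show -α - -β = β - α by ring, show -β + -α = -α + -β by ring] at this
    linarith
  · have hq : 0 ≤ p - 1 := by linarith
    have hL : 0 ≤ ((p - 1) ^ (p - 1) / 2) * (|α| + |β|) ^ p * |B - A| ^ p := by positivity
    have hBp : 0 ≤ β * B ^ p := by positivity
    have hAp : 0 ≤ -α * A ^ p := mul_nonneg (by linarith) (by positivity)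
    have : 0 ≤ (β - α) ^ (p - 1) * (β * B ^ p - α * A ^ p) :=
      mul_nonneg (by positivity) (by linarith)
    linarith

/-- elementary inequality (a) of Lemma 2.4. -/
theorem elementary_inequality_a (p : ℝ) (hp : 1 < p) (α β A B : ℝ)
    (hA : 0 ≤ A) (hB : 0 ≤ B) :
    -((p - 1) ^ (p - 1) / 2) * (|α| + |β|) ^ p * |B - A| ^ p ≤
      |β - α| ^ (p - 2) * (β - α) * (β * B ^ p - α * A ^ p) := by
  rcases lt_trichotomy α β with h | h | h
  · exact aux_lt p hp α β A B h hA hB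
  · have hq : 0 ≤ p - 1 := by linarith
    have hL : 0 ≤ ((p - 1) ^ (p - 1) / 2) * (|α| + |β|) ^ p * |B - A| ^ p := by positivity
    have e : β - α = 0 := by linarith
    have : |β - α| ^ (p - 2) * (β - α) * (β * B ^ p - α * A ^ p) = 0 := by
      rw [e, mul_zero, zero_mul]
    linarith
  · have := aux_lt p hp β α B A h hB hA
    rw [abs_sub_comm A B, abs_sub_comm α β, add_comm |β| |α|] at this
    linarith
end

section
/- Let p > 1 and set d_p = (1/2)·(2(p−1))^{p−1}. Then for all α, β ∈ ℝ with β ≥ α and all A, B ≥ 0: (β−α)^{p−1}·(β·B^p − α·A^p) ≥ (1/4)·(β−α)^p·(A^p + B^p) − d_p·(|α|+|β|)^p·|B−A|^p. -/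
theorem aux_young_s10 (p : ℝ) (hp : 1 < p) (u y : ℝ) (hu : 0 ≤ u) (hy : 0 ≤ y) :
    p * (u ^ (p - 1) * y) ≤ (p - 1) * u ^ p + y ^ p := by
  have hp0 : 0 < p := by linarith
  have hp1 : 0 < p - 1 := by linarith
  have h := Real.young_inequality_of_nonneg hy (Real.rpow_nonneg hu (p - 1))
    (Real.HolderConjugate.conjExponent hp)
  have e : (u ^ (p - 1)) ^ (Real.conjExponent p) = u ^ p := by
    rw [← Real.rpow_mul hu]
    congr 1
    unfold Real.conjExponent
    field_simp
  rw [e] at h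
  have h2 := mul_le_mul_of_nonneg_left h hp0.le
  have e2 : p * (y ^ p / p + u ^ p / Real.conjExponent p) = (p - 1) * u ^ p + y ^ p := by
    unfold Real.conjExponent
    field_simp
    ring
  rw [e2] at h2
  linarith

theorem aux_key (p : ℝ) (hp : 1 < p) (D s m a b : ℝ) (hD : 0 ≤ D) (hm : |m| ≤ s / 2)
    (ha : 0 ≤ a) (hab : a ≤ b) :
    D ^ (p - 1) * (|m| * (b ^ p - a ^ p)) ≤ 1 / 4 * (D ^ p * b ^ p) +
      (1 / 2) * (2 * (p - 1)) ^ (p - 1) * s ^ p * (b - a) ^ p := by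
  have hb : 0 ≤ b := ha.trans hab
  have hs : 0 ≤ s := by linarith [abs_nonneg m]
  have hba : 0 ≤ b - a := by linarith
  have hp0 : 0 < p := by linarith
  have hc : 0 < 2 * (p - 1) := by linarith
  have hle : a ^ p ≤ b ^ p := Real.rpow_le_rpow ha hab hp0.le
  have hsplit : ∀ x : ℝ, 0 ≤ x → x ^ p = x ^ (p - 1) * x := by
    intro x hx
    have := Real.rpow_add_one' hx (y := p - 1) (by linarith)
    rw [← this]; congr 1; ring
  have h1 : b ^ p - a ^ p ≤ p * (b ^ (p - 1) * (b - a)) := by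
    have := aux_young_s10 p hp b a hb ha
    have e := hsplit b hb
    nlinarith
  have h2 : D ^ (p - 1) * (|m| * (b ^ p - a ^ p)) ≤
      D ^ (p - 1) * (s / 2 * (p * (b ^ (p - 1) * (b - a)))) := by
    have := Real.rpow_nonneg hD (p - 1)
    have : 0 ≤ b ^ p - a ^ p := by linarith
    gcongr
  refine h2.trans ?_
  have h3 := aux_young_s10 p hp (D * b / (2 * (p - 1))) (s * (b - a)) (by positivity) (by positivity)
  rw [hsplit (D * b / (2 * (p - 1))) (by positivity), Real.div_rpow (by positivity) hc.le,
    Real.mul_rpow hD hb, Real.mul_rpow hs hba] at h3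
  rw [hsplit D hD, hsplit b hb]
  have hC : 0 < (2 * (p - 1)) ^ (p - 1) := Real.rpow_pos_of_pos hc _
  generalize (2 * (p - 1)) ^ (p - 1) = C at *
  have h4 := mul_le_mul_of_nonneg_left h3 (half_pos hC).le
  have hp1 : p - 1 ≠ 0 := by linarith
  have e1 : C / 2 * (p * (D ^ (p - 1) * b ^ (p - 1) / C * (s * (b - a)))) =
      D ^ (p - 1) * (s / 2 * (p * (b ^ (p - 1) * (b - a)))) := by
    field_simp
  have e2 : C / 2 * ((p - 1) * (D ^ (p - 1) * b ^ (p - 1) / C * (D * b / (2 * (p - 1)))) +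
      s ^ p * (b - a) ^ p) = 1 / 4 * (D ^ (p - 1) * D * (b ^ (p - 1) * b)) +
      1 / 2 * C * s ^ p * (b - a) ^ p := by
    field_simp
    ring
  rw [e1, e2] at h4
  exact h4

/-- elementary inequality (b) of Lemma 2.4. -/
theorem elementary_inequality_b (p : ℝ) (hp : 1 < p) (α β A B : ℝ)
    (hαβ : α ≤ β) (hA : 0 ≤ A) (hB : 0 ≤ B) :
    1 / 4 * (β - α) ^ p * (A ^ p + B ^ p) -
        (1 / 2) * (2 * (p - 1)) ^ (p - 1) * (|α| + |β|) ^ p * |B - A| ^ p ≤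
      (β - α) ^ (p - 1) * (β * B ^ p - α * A ^ p) := by
  have hD : 0 ≤ β - α := by linarith
  have hm : |(α + β) / 2| ≤ (|α| + |β|) / 2 := by
    rw [abs_div, abs_two]
    linarith [abs_add_le α β]
  have hsplit : (β - α) ^ p = (β - α) ^ (p - 1) * (β - α) := by
    have := Real.rpow_add_one' hD (y := p - 1) (by linarith)
    rw [← this]; congr 1; ring
  have hE := Real.rpow_nonneg hD (p - 1)
  have hAp := Real.rpow_nonneg hA p
  have hBp := Real.rpow_nonneg hB p
  have hDp := Real.rpow_nonneg hD p
  have e : (β - α) ^ (p - 1) * (β * B ^ p - α * A ^ p) = 1 / 2 * (β - α) ^ p * (A ^ p + B ^ p)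
      + (β - α) ^ (p - 1) * ((α + β) / 2 * (B ^ p - A ^ p)) := by
    rw [hsplit]; ring
  rw [e]
  have hDA := mul_nonneg hDp hAp
  have hDB := mul_nonneg hDp hBp
  rcases le_total A B with h | h
  · have k := aux_key p hp _ _ _ A B hD hm hA h
    rw [abs_of_nonneg (by linarith : 0 ≤ B - A)]
    have hle : A ^ p ≤ B ^ p := Real.rpow_le_rpow hA h (by linarith)
    have := mul_le_mul_of_nonneg_left (mul_le_mul_of_nonneg_right
      (neg_abs_le ((α + β) / 2)) (sub_nonneg.2 hle)) hE
    linarith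
  · have k := aux_key p hp _ _ _ B A hD hm hB h
    rw [abs_sub_comm, abs_of_nonneg (by linarith : 0 ≤ A - B)]
    have hle : B ^ p ≤ A ^ p := Real.rpow_le_rpow hB h (by linarith)
    have := mul_le_mul_of_nonneg_left (mul_le_mul_of_nonneg_right
      (le_abs_self ((α + β) / 2)) (sub_nonneg.2 hle)) hE
    linarith
end

section
/- Let p > 1 and set b_p = 1 if 1 < p ≤ 2 and b_p = 2^{−(p−1)} if p > 2. Then for all real numbers A ≥ B ≥ 0: (A−B)^{p−1} ≥ b_p·A^{p−1} − B^{p−1}. -/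
/-- elementary inequality (c) of Lemma 2.4. -/
theorem elementary_inequality_c (p : ℝ) (hp : 1 < p) (A B : ℝ)
    (hB : 0 ≤ B) (hBA : B ≤ A) :
    (if p ≤ 2 then (1 : ℝ) else 2 ^ (-(p - 1))) * A ^ (p - 1) - B ^ (p - 1) ≤
      (A - B) ^ (p - 1) := by
  have hA : 0 ≤ A := hB.trans hBA
  have hAB : 0 ≤ A - B := by linarith
  have hq : 0 ≤ p - 1 := by linarith
  split_ifs with h
  · have := Real.rpow_add_le_add_rpow hAB hB hq (by linarith)
    rw [sub_add_cancel] at this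
    linarith
  · have e : (2 : ℝ) ^ (-(p - 1)) * A ^ (p - 1) = (A / 2) ^ (p - 1) := by
      rw [Real.div_rpow hA (by norm_num), Real.rpow_neg (by norm_num)]
      ring
    rw [e]
    have h1 := Real.rpow_nonneg hB (p - 1)
    have h2 := Real.rpow_nonneg hAB (p - 1)
    rcases le_total (A / 2) B with h3 | h3
    · have := Real.rpow_le_rpow (by linarith) h3 hq
      linarith
    · have := Real.rpow_le_rpow (by linarith) (show A / 2 ≤ A - B by linarith) hq
      linarith
end
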